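/- arXiv:0803.2131 — 4 statements merged into one kernel-verified Lean document; each statement's English description precedes it below -/
import Mathlib

section
/- Let σ₀ = {0} ∪ {(-1)^k/k : k = 1, 2, 3, ...}, a compact subset of ℝ. For a function g : σ₀ → ℂ define the sequence U(g) = (a_1, a_2, a_3, ...) by a_1 = g(-1), a_{2m} = g(1/(2m)) − g(1/(2m+2)) for m ≥ 1, and a_{2m+1} = g(−1/(2m+1)) − g(−1/(2m−1)) for m ≥ 1. Then U is a bijection from the set of functions g : σ₀ → ℂ that are continuous on σ₀ and of bounded variation on σ₀ onto ℓ¹ (absolutely summable complex sequences), and it satisfies the norm estimates ‖U(g)‖_1 ≤ |g(-1)| + var_{σ₀}(g) for every such g, and, for every x ∈ ℓ¹, the function g = U^{-1}(x) satisfies |g(-1)| + var_{σ₀}(g) ≤ 2‖x‖_1. -/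
open MeasureTheory Filter Topology

/-- The set `σ₀ = {0} ∪ {(-1)^k/k : k ≥ 1}`. -/
noncomputable def sigma0 : Set ℝ := {0} ∪ {t : ℝ | ∃ k : ℕ, 1 ≤ k ∧ t = (-1) ^ k / k}

lemma neg_one_mem_sigma0 : (-1 : ℝ) ∈ sigma0 := Or.inr ⟨1, le_rfl, by norm_num⟩

lemma mem_even (j : ℕ) : (1 : ℝ) / (2 * j + 2) ∈ sigma0 := by
  refine Or.inr ⟨2 * j + 2, by omega, ?_⟩
  rw [Even.neg_one_pow ⟨j + 1, by ring⟩]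
  push_cast
  ring

lemma mem_even' (j : ℕ) : (1 : ℝ) / (2 * j + 4) ∈ sigma0 := by
  refine Or.inr ⟨2 * j + 4, by omega, ?_⟩
  rw [Even.neg_one_pow ⟨j + 2, by ring⟩]
  push_cast
  ring

lemma mem_odd (j : ℕ) : -(1 : ℝ) / (2 * j + 1) ∈ sigma0 := by
  refine Or.inr ⟨2 * j + 1, by omega, ?_⟩
  rw [Odd.neg_one_pow ⟨j, by ring⟩]
  push_cast
  ring

lemma mem_odd' (j : ℕ) : -(1 : ℝ) / (2 * j + 3) ∈ sigma0 := by
  refine Or.inr ⟨2 * j + 3, by omega, ?_⟩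
  rw [Odd.neg_one_pow ⟨j + 1, by ring⟩]
  push_cast
  ring

/-!
Every nonzero point of `σ₀` is isolated, and `U g` lists the value of `g` at the least point `-1`
together with its jumps at the other nonzero points. Since the negative points increase to `0` and
the positive ones decrease to `0`, the variation of a *continuous* `g` is the sum of the sizes of
these jumps, so `U` is isometric for the norm `‖g (-1)‖ + var g`; this gives both estimates and
injectivity. Conversely, given `x ∈ ℓ¹`, the sum of the step functions with jump `x n` at the
`n`-th point converges uniformly to a continuous function which `U` maps to `x`.
-/

open Set

theorem eVariationOn_insert_range_of_monotone {α E : Type*} [LinearOrder α] [PseudoEMetricSpace E]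
    {f : α → E} {u : ℕ → α} {a : α} (hu : Monotone u) (hua : ∀ n, u n ≤ a)
    (hf : Tendsto (f ∘ u) atTop (𝓝 (f a))) :
    eVariationOn f (insert a (range u)) = ∑' n, edist (f (u (n + 1))) (f (u n)) := by
  refine le_antisymm (le_of_forall_lt fun v hv => ?_) ?_
  · -- `f` is the pointwise limit on `insert a (range u)` of its truncations at `u n`.
    have truncation_tendsto : ∀ t ∈ insert a (range u),
        Tendsto (fun n => f (min t (u n))) atTop (𝓝 (f t)) := by
      rintro _ (rfl | ⟨k, rfl⟩)
      · simpa only [min_eq_right (hua _)] using! hf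
      · refine tendsto_const_nhds.congr' ?_
        filter_upwards [eventually_ge_atTop k] with n hkn
        rw [min_eq_left (hu hkn)]
    obtain ⟨n, hn⟩ := (eVariationOn.lowerSemicontinuous_aux truncation_tendsto hv).exists
    have mapsTo_image : MapsTo (min · (u n)) (insert a (range u)) (u '' Iic n) := by
      rintro _ (rfl | ⟨k, rfl⟩)
      · exact ⟨n, mem_Iic.2 le_rfl, (min_eq_right (hua n)).symm⟩
      · exact ⟨min k n, min_le_right k n, hu.map_min⟩
    calc v < eVariationOn (f ∘ (min · (u n))) (insert a (range u)) := hn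
      _ ≤ eVariationOn f (u '' Iic n) :=
        eVariationOn.comp_le_of_monotoneOn f _
          (fun _ _ _ _ hst => min_le_min_right (u n) hst) mapsTo_image
      _ = ∑ i ∈ Finset.range n, edist (f (u (i + 1))) (f (u i)) := by
        simp only [eVariationOn.image_range_of_monotone f hu, edist_comm]
      _ ≤ ∑' i, edist (f (u (i + 1))) (f (u i)) := ENNReal.sum_le_tsum _
  · rw [ENNReal.tsum_eq_iSup_nat]
    exact iSup_le fun n => eVariationOn.sum_le hu fun i => mem_insert_of_mem a (mem_range_self i)

theorem eVariationOn_insert_range_of_antitone {α E : Type*} [LinearOrder α] [PseudoEMetricSpace E]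
    {f : α → E} {u : ℕ → α} {a : α} (hu : Antitone u) (hau : ∀ n, a ≤ u n)
    (hf : Tendsto (f ∘ u) atTop (𝓝 (f a))) :
    eVariationOn f (insert a (range u)) = ∑' n, edist (f (u (n + 1))) (f (u n)) := by
  rw [← eVariationOn.comp_ofDual]
  exact eVariationOn_insert_range_of_monotone (f := f ∘ OrderDual.ofDual) hu.dual_right hau hf

section StepSum

variable {ι α E : Type*} [NormedAddCommGroup E] {c : ι → α} {x : ι → E}

/-- The step function on a preorder `α` which jumps by `x i` at each `c i`; the jump at `c i` is
already included in the value there. It inverts the map `U` of the theorem. -/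
noncomputable def stepSum [Preorder α] (c : ι → α) (x : ι → E) (t : α) : E :=
  ∑' i, (Ici (c i)).indicator (fun _ => x i) t

theorem continuous_stepSum [Preorder α] [TopologicalSpace α] [CompleteSpace E]
    (hc : ∀ i, IsClopen (Ici (c i))) (hx : Summable fun i => ‖x i‖) :
    Continuous (stepSum c x) :=
  continuous_tsum (fun i => continuous_const.indicator (by simp [(hc i).frontier_eq])) hx
    fun _ _ => norm_indicator_le_norm_self _ _

theorem stepSum_apply_of_forall_le [PartialOrder α] (hc : Function.Injective c) {i : ι}
    (hi : ∀ j, c i ≤ c j) : stepSum c x (c i) = x i := by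
  have below_iff (j : ι) : c j ≤ c i ↔ j = i :=
    ⟨fun hj => hc (hj.antisymm (hi j)), fun hj => hj ▸ le_rfl⟩
  classical
  simp only [stepSum, indicator_apply, mem_Ici, below_iff, tsum_ite_eq]

theorem stepSum_sub_of_covBy [LinearOrder α] [CompleteSpace E] (hc : Function.Injective c)
    (hx : Summable fun i => ‖x i‖) {i : ι} {s : α} (hs : s ⋖ c i) :
    stepSum c x (c i) - stepSum c x s = x i := by
  classical
  have summable_steps (t : α) : Summable fun j => (Ici (c j)).indicator (fun _ => x j) t :=
    .of_norm_bounded hx fun _ => norm_indicator_le_norm_self _ _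
  have step_sub (j : ι) : (Ici (c j)).indicator (fun _ => x j) (c i) -
      (Ici (c j)).indicator (fun _ => x j) s = if j = i then x j else 0 := by
    rcases eq_or_ne j i with rfl | hji
    · simp [hs.lt]
    · have : c j ≤ c i ↔ c j ≤ s := by
        rw [(hc.ne hji).le_iff_lt, hs.lt_iff_le_left]
      simp [indicator_apply, this, hji]
  simp only [stepSum, ← (summable_steps _).tsum_sub (summable_steps s), step_sub, tsum_ite_eq]

end StepSum

namespace sigma0

noncomputable instance : Zero ↥sigma0 := ⟨⟨0, Or.inl rfl⟩⟩

/-- The point `(-1)ⁿ⁺¹ / (n + 1)` of `σ₀`, where the `n`-th entry of `U g` records the jump of `g`: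
even `n` give the negative points, in increasing order, and odd `n` give the positive points, in
decreasing order. -/
noncomputable def pt (n : ℕ) : ↥sigma0 :=
  ⟨(-1) ^ (n + 1) / (n + 1 : ℕ), Or.inr ⟨n + 1, n.succ_pos, rfl⟩⟩

theorem coe_pt_two_mul (j : ℕ) : (pt (2 * j) : ℝ) = -1 / (2 * j + 1) := by
  simp [pt, pow_succ]

theorem coe_pt_two_mul_add_one (j : ℕ) : (pt (2 * j + 1) : ℝ) = 1 / (2 * j + 2) := by
  simp [pt, pow_add, add_assoc, one_add_one_eq_two]

theorem eq_zero_or_mem_range_pt (t : ↥sigma0) : t = 0 ∨ t ∈ range pt := by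
  obtain ⟨t, rfl | ⟨k, hk, rfl⟩⟩ := t
  · exact .inl rfl
  · obtain ⟨n, rfl⟩ := Nat.exists_eq_add_of_le' hk
    exact .inr ⟨n, rfl⟩

theorem abs_pt (n : ℕ) : |(pt n : ℝ)| = 1 / (n + 1) := by
  simp [pt, abs_div, abs_of_nonneg (n.cast_add_one_pos (α := ℝ)).le]

theorem pt_injective : Function.Injective pt := fun m n h => by
  have := congrArg (fun t : ↥sigma0 => |(t : ℝ)|) h
  simpa [abs_pt] using this

theorem tendsto_pt : Tendsto pt atTop (𝓝 0) := by
  refine tendsto_subtype_rng.2 ((tendsto_zero_iff_abs_tendsto_zero _).2 ?_)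
  simpa only [Function.comp_def, abs_pt] using tendsto_one_div_add_atTop_nhds_zero_nat

theorem pt_two_mul_neg (j : ℕ) : pt (2 * j) < 0 := by
  rw [← Subtype.coe_lt_coe, coe_pt_two_mul]
  exact div_neg_of_neg_of_pos neg_one_lt_zero (by positivity)

theorem pt_two_mul_add_one_pos (j : ℕ) : 0 < pt (2 * j + 1) := by
  rw [← Subtype.coe_lt_coe, coe_pt_two_mul_add_one]
  exact div_pos one_pos (by positivity)

theorem strictMono_pt_two_mul : StrictMono fun j => pt (2 * j) := fun i j hij => by
  rw [← Subtype.coe_lt_coe, coe_pt_two_mul, coe_pt_two_mul, neg_div, neg_div, neg_lt_neg_iff]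
  gcongr

theorem strictAnti_pt_two_mul_add_one : StrictAnti fun j => pt (2 * j + 1) := fun i j hij => by
  rw [← Subtype.coe_lt_coe, coe_pt_two_mul_add_one, coe_pt_two_mul_add_one]
  gcongr

theorem range_pt_two_mul : range (fun j => pt (2 * j)) = Iio 0 := by
  refine Subset.antisymm (range_subset_iff.2 pt_two_mul_neg) fun t ht => ?_
  obtain rfl | ⟨n, rfl⟩ := eq_zero_or_mem_range_pt t
  · exact (lt_irrefl (0 : ↥sigma0) ht).elim
  · obtain ⟨j, rfl | rfl⟩ := n.even_or_odd'
    · exact mem_range_self j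
    · exact (lt_asymm ht (pt_two_mul_add_one_pos j)).elim

theorem range_pt_two_mul_add_one : range (fun j => pt (2 * j + 1)) = Ioi 0 := by
  refine Subset.antisymm (range_subset_iff.2 pt_two_mul_add_one_pos) fun t ht => ?_
  obtain rfl | ⟨n, rfl⟩ := eq_zero_or_mem_range_pt t
  · exact (lt_irrefl (0 : ↥sigma0) ht).elim
  · obtain ⟨j, rfl | rfl⟩ := n.even_or_odd'
    · exact (lt_asymm ht (pt_two_mul_neg j)).elim
    · exact mem_range_self j

theorem pt_zero_le (t : ↥sigma0) : pt 0 ≤ t := by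
  rcases lt_or_ge t 0 with ht | ht
  · obtain ⟨j, rfl⟩ := range_pt_two_mul.ge ht
    exact strictMono_pt_two_mul.monotone j.zero_le
  · exact (pt_two_mul_neg 0).le.trans ht

theorem pt_two_mul_covBy (j : ℕ) : pt (2 * j) ⋖ pt (2 * j + 2) :=
  (OrdConnected.apply_covBy_apply_iff (OrderEmbedding.ofStrictMono _ strictMono_pt_two_mul)
    (range_pt_two_mul ▸ ordConnected_Iio)).2 (Order.covBy_add_one j)

theorem pt_two_mul_add_three_covBy (j : ℕ) : pt (2 * j + 3) ⋖ pt (2 * j + 1) := by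
  refine ⟨strictAnti_pt_two_mul_add_one j.lt_succ_self, fun t hlt htl => ?_⟩
  obtain ⟨i, rfl⟩ := range_pt_two_mul_add_one.ge ((pt_two_mul_add_one_pos (j + 1)).trans hlt)
  have hij : i < j + 1 := strictAnti_pt_two_mul_add_one.lt_iff_gt.1 hlt
  have hji : j < i := strictAnti_pt_two_mul_add_one.lt_iff_gt.1 htl
  omega

theorem isClopen_Ici_pt (n : ℕ) : IsClopen (Ici (pt n)) := by
  refine ⟨isClosed_Ici, ?_⟩
  obtain ⟨_ | j, rfl | rfl⟩ := n.even_or_odd'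
  · rw [show Ici (pt (2 * 0)) = univ from eq_univ_of_forall pt_zero_le]
    exact isOpen_univ
  · exact (pt_two_mul_add_three_covBy 0).Ioi_eq ▸ isOpen_Ioi
  · exact (pt_two_mul_covBy j).Ioi_eq ▸ isOpen_Ioi
  · exact (pt_two_mul_add_three_covBy (j + 1)).Ioi_eq ▸ isOpen_Ioi

section JumpSeq

variable {E : Type*} [NormedAddCommGroup E] {g : ↥sigma0 → E}

/-- The sequence `U g`: the value of `g` at the least point `pt 0 = -1`, and then the jumps of `g`
from the predecessor of `pt n` to `pt n`. -/
noncomputable def jumpSeq (g : ↥sigma0 → E) : ℕ → E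
  | 0 => g (pt 0)
  | n + 1 => if Even n then g (pt (n + 1)) - g (pt (n + 3)) else g (pt (n + 1)) - g (pt (n - 1))

theorem jumpSeq_zero (g : ↥sigma0 → E) : jumpSeq g 0 = g (pt 0) := rfl

theorem jumpSeq_two_mul_add_one (g : ↥sigma0 → E) (j : ℕ) :
    jumpSeq g (2 * j + 1) = g (pt (2 * j + 1)) - g (pt (2 * j + 3)) := by
  simp [jumpSeq]

theorem jumpSeq_two_mul_add_two (g : ↥sigma0 → E) (j : ℕ) :
    jumpSeq g (2 * j + 2) = g (pt (2 * j + 2)) - g (pt (2 * j)) := by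
  simp [jumpSeq]

theorem jumpSeq_sub (g h : ↥sigma0 → E) : jumpSeq (g - h) = jumpSeq g - jumpSeq h := by
  funext n
  cases n with
  | zero => rfl
  | succ n => simp only [jumpSeq, Pi.sub_apply]; split_ifs <;> abel

theorem eVariationOn_Iic_zero (hg : Continuous g) :
    eVariationOn g (Iic 0) = ∑' j, ‖jumpSeq g (2 * j + 2)‖ₑ := by
  have tendsto_even : Tendsto (fun j => pt (2 * j)) atTop (𝓝 0) :=
    tendsto_pt.comp (tendsto_atTop_mono (fun j => by lia : ∀ j, j ≤ 2 * j) tendsto_id)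
  rw [← Iio_insert, ← range_pt_two_mul,
    eVariationOn_insert_range_of_monotone strictMono_pt_two_mul.monotone
      (fun j => (pt_two_mul_neg j).le) ((hg.tendsto 0).comp tendsto_even)]
  simp only [edist_eq_enorm_sub, jumpSeq_two_mul_add_two, mul_add, mul_one]

theorem eVariationOn_Ici_zero (hg : Continuous g) :
    eVariationOn g (Ici 0) = ∑' j, ‖jumpSeq g (2 * j + 1)‖ₑ := by
  have tendsto_odd : Tendsto (fun j => pt (2 * j + 1)) atTop (𝓝 0) :=
    tendsto_pt.comp (tendsto_atTop_mono (fun j => by lia : ∀ j, j ≤ 2 * j + 1) tendsto_id)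
  rw [← Ioi_insert, ← range_pt_two_mul_add_one,
    eVariationOn_insert_range_of_antitone strictAnti_pt_two_mul_add_one.antitone
      (fun j => (pt_two_mul_add_one_pos j).le) ((hg.tendsto 0).comp tendsto_odd)]
  exact tsum_congr fun j => by rw [edist_comm, edist_eq_enorm_sub, jumpSeq_two_mul_add_one]; rfl

theorem tsum_enorm_jumpSeq (hg : Continuous g) :
    ∑' n, ‖jumpSeq g n‖ₑ = ‖g (pt 0)‖ₑ + eVariationOn g univ := by
  rw [← Iic_union_Ici (a := (0 : ↥sigma0)), eVariationOn.union g isGreatest_Iic isLeast_Ici,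
    eVariationOn_Iic_zero hg, eVariationOn_Ici_zero hg,
    ← tsum_even_add_odd ENNReal.summable ENNReal.summable,
    tsum_eq_zero_add' (f := fun j => ‖jumpSeq g (2 * j)‖ₑ) ENNReal.summable, add_assoc]
  rfl

theorem injOn_jumpSeq : InjOn (jumpSeq (E := E)) {g | Continuous g} := by
  intro g hg h hh hgh
  have key : ‖(g - h) (pt 0)‖ₑ + eVariationOn (g - h) univ = 0 := by
    rw [← tsum_enorm_jumpSeq (hg.sub hh), jumpSeq_sub, hgh]
    simp
  obtain ⟨h₀, hvar⟩ := add_eq_zero.1 key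
  funext t
  have : (g - h) t = (g - h) (pt 0) :=
    edist_eq_zero.1 ((eVariationOn.eq_zero_iff _).1 hvar t (mem_univ _) (pt 0) (mem_univ _))
  exact sub_eq_zero.1 (this.trans (enorm_eq_zero.1 h₀))

theorem summable_norm_jumpSeq_iff (hg : Continuous g) :
    Summable (fun n => ‖jumpSeq g n‖) ↔ BoundedVariationOn g univ := by
  rw [← tsum_enorm_ne_top_iff_summable_norm, tsum_enorm_jumpSeq hg]
  simp [BoundedVariationOn]

theorem tsum_norm_jumpSeq (hg : Continuous g) (hbv : BoundedVariationOn g univ) :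
    ∑' n, ‖jumpSeq g n‖ = ‖g (pt 0)‖ + (eVariationOn g univ).toReal := by
  have := congrArg ENNReal.toReal (tsum_enorm_jumpSeq hg)
  rwa [ENNReal.tsum_toReal_eq fun _ => enorm_ne_top, ENNReal.toReal_add enorm_ne_top hbv] at this

theorem jumpSeq_stepSum [CompleteSpace E] {x : ℕ → E} (hx : Summable fun n => ‖x n‖) :
    jumpSeq (stepSum pt x) = x := by
  funext n
  obtain ⟨_ | j, rfl | rfl⟩ := n.even_or_odd'
  · exact stepSum_apply_of_forall_le pt_injective fun n => pt_zero_le (pt n)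
  · exact stepSum_sub_of_covBy pt_injective hx (pt_two_mul_add_three_covBy 0)
  · exact (jumpSeq_two_mul_add_two _ j).trans
      (stepSum_sub_of_covBy pt_injective hx (pt_two_mul_covBy j))
  · exact (jumpSeq_two_mul_add_one _ (j + 1)).trans
      (stepSum_sub_of_covBy pt_injective hx (pt_two_mul_add_three_covBy (j + 1)))

theorem bijOn_jumpSeq [CompleteSpace E] :
    BijOn jumpSeq {g : ↥sigma0 → E | Continuous g ∧ BoundedVariationOn g univ}
      {x : ℕ → E | Summable fun n => ‖x n‖} := by
  refine ⟨fun g hg => (summable_norm_jumpSeq_iff hg.1).2 hg.2,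
    injOn_jumpSeq.mono fun g hg => hg.1, fun x hx => ?_⟩
  have hcont : Continuous (stepSum pt x) := continuous_stepSum isClopen_Ici_pt hx
  refine ⟨stepSum pt x, ⟨hcont, (summable_norm_jumpSeq_iff hcont).1 ?_⟩, jumpSeq_stepSum hx⟩
  rwa [jumpSeq_stepSum hx]

end JumpSeq

end sigma0

open sigma0 in
theorem stmt4_general {E : Type*} [NormedAddCommGroup E] [CompleteSpace E] :
    ∃ U : (↥sigma0 → E) → (ℕ → E),
      (∀ g : ↥sigma0 → E,
        U g 0 = g ⟨-1, neg_one_mem_sigma0⟩ ∧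
        (∀ j : ℕ, U g (2 * j + 1) =
          g ⟨1 / (2 * j + 2), mem_even j⟩ - g ⟨1 / (2 * j + 4), mem_even' j⟩) ∧
        (∀ j : ℕ, U g (2 * j + 2) =
          g ⟨-1 / (2 * j + 3), mem_odd' j⟩ - g ⟨-1 / (2 * j + 1), mem_odd j⟩)) ∧
      Set.BijOn U {g : ↥sigma0 → E | Continuous g ∧ BoundedVariationOn g Set.univ}
        {x : ℕ → E | Summable fun n => ‖x n‖} ∧
      ∀ g : ↥sigma0 → E, Continuous g → BoundedVariationOn g Set.univ →
        ∑' n : ℕ, ‖U g n‖ =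
          ‖g ⟨-1, neg_one_mem_sigma0⟩‖ + (eVariationOn g Set.univ).toReal := by
  have neg_one_eq : ⟨-1, neg_one_mem_sigma0⟩ = pt 0 := Subtype.ext (by simp [pt])
  have even_eq (j : ℕ) : ⟨1 / (2 * j + 2), mem_even j⟩ = pt (2 * j + 1) :=
    Subtype.ext (coe_pt_two_mul_add_one j).symm
  have even_eq' (j : ℕ) : ⟨1 / (2 * j + 4), mem_even' j⟩ = pt (2 * j + 3) :=
    (Subtype.ext (by push_cast; ring)).trans (even_eq (j + 1))
  have odd_eq (j : ℕ) : ⟨-1 / (2 * j + 1), mem_odd j⟩ = pt (2 * j) :=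
    Subtype.ext (coe_pt_two_mul j).symm
  have odd_eq' (j : ℕ) : ⟨-1 / (2 * j + 3), mem_odd' j⟩ = pt (2 * j + 2) :=
    (Subtype.ext (by push_cast; ring)).trans (odd_eq (j + 1))
  simp only [neg_one_eq, even_eq, even_eq', odd_eq, odd_eq']
  exact ⟨jumpSeq, fun g => ⟨jumpSeq_zero g, jumpSeq_two_mul_add_one g, jumpSeq_two_mul_add_two g⟩,
    bijOn_jumpSeq, fun _ => tsum_norm_jumpSeq⟩

/-- The map `U`, sending a function `g : σ₀ → ℂ` to the sequence
`(g(-1), g(1/2) - g(1/4), g(-1/3) - g(-1)), g(1/4) - g(1/6), ...)`, is a bijection from the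
set of functions on `σ₀` that are continuous and of bounded variation onto `ℓ¹`, and satisfies
`‖U(g)‖₁ ≤ |g(-1)| + var_{σ₀}(g)` and `|g(-1)| + var_{σ₀}(g) ≤ 2‖U(g)‖₁`.
(The sequence `U g : ℕ → ℂ` is `0`-indexed: `(U g) (n)` is the term `a_{n+1}`; the second and
third defining clauses below are the clauses `a_{2m} = g(1/(2m)) - g(1/(2m+2))` and
`a_{2m+1} = g(-1/(2m+1)) - g(-1/(2m-1))` for `m ≥ 1`, reindexed by `m = j + 1`.) -/
theorem stmt4 :
    ∃ U : (↥sigma0 → ℂ) → (ℕ → ℂ),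
      (∀ g : ↥sigma0 → ℂ,
        U g 0 = g ⟨-1, neg_one_mem_sigma0⟩ ∧
        (∀ j : ℕ, U g (2 * j + 1) =
          g ⟨1 / (2 * j + 2), mem_even j⟩ - g ⟨1 / (2 * j + 4), mem_even' j⟩) ∧
        (∀ j : ℕ, U g (2 * j + 2) =
          g ⟨-1 / (2 * j + 3), mem_odd' j⟩ - g ⟨-1 / (2 * j + 1), mem_odd j⟩)) ∧
      Set.BijOn U {g : ↥sigma0 → ℂ | Continuous g ∧ BoundedVariationOn g Set.univ}
        {x : ℕ → ℂ | Summable fun n => ‖x n‖} ∧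
      (∀ g : ↥sigma0 → ℂ, Continuous g → BoundedVariationOn g Set.univ →
        (∑' n : ℕ, ‖U g n‖) ≤
            ‖g ⟨-1, neg_one_mem_sigma0⟩‖ + (eVariationOn g Set.univ).toReal ∧
        ‖g ⟨-1, neg_one_mem_sigma0⟩‖ + (eVariationOn g Set.univ).toReal ≤
            2 * ∑' n : ℕ, ‖U g n‖) := by
  obtain ⟨U, hU, hbij, hnorm⟩ := stmt4_general (E := ℂ)
  exact ⟨U, hU, hbij, fun g hg hbv => ⟨(hnorm g hg hbv).le, (hnorm g hg hbv).ge.trans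
    (le_mul_of_one_le_left (tsum_nonneg fun _ => norm_nonneg _) one_le_two)⟩⟩
end

section
/- Let σ₀ = {0} ∪ {(-1)^k/k : k = 1, 2, 3, ...}, a compact subset of ℝ, and let ℓ¹ denote the Banach space of absolutely summable complex sequences. There exist a bounded linear operator T on ℓ¹ and a constant C > 0 such that ‖p(T)‖ ≤ C·(sup_{t∈σ₀}|p(t)| + var_{σ₀}(p)) for every polynomial p with complex coefficients (where p(T) is given by the polynomial functional calculus and p is regarded as the function t ↦ p(t) on ℝ), yet there is no BV(σ₀) extension of the polynomial calculus of T. -/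
open MeasureTheory Filter Topology

lemma zero_mem_sigma0 : (0 : ℝ) ∈ sigma0 := Or.inl rfl

lemma mem_sigma0 (k : ℕ) (hk : 1 ≤ k) : ((-1 : ℝ)) ^ k / k ∈ sigma0 :=
  Or.inr ⟨k, hk, rfl⟩

lemma sigma0_eq : sigma0 = insert (0 : ℝ) (Set.range fun k : ℕ => ((-1 : ℝ)) ^ (k + 1) / (k + 1)) := by
  ext t
  simp only [sigma0, Set.mem_union, Set.mem_singleton_iff, Set.mem_setOf_eq, Set.mem_insert_iff,
    Set.mem_range]
  constructor
  · rintro (h | ⟨k, hk, rfl⟩)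
    · exact Or.inl h
    · right
      refine ⟨k - 1, ?_⟩
      have hk' : k - 1 + 1 = k := Nat.succ_pred_eq_of_pos hk
      rw [hk']
      congr 1
      exact_mod_cast congrArg (Nat.cast : ℕ → ℝ) hk'
  · rintro (h | ⟨k, rfl⟩)
    · exact Or.inl h
    · right
      exact ⟨k + 1, Nat.le_add_left 1 k, by push_cast; ring⟩

lemma sigma0_isCompact : IsCompact sigma0 := by
  rw [sigma0_eq]
  have h : Tendsto (fun k : ℕ => ((-1 : ℝ)) ^ (k + 1) / (k + 1)) atTop (𝓝 0) := by
    apply squeeze_zero_norm (a := fun k : ℕ => 1 / ((k : ℝ) + 1))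
    · intro k
      rw [norm_div, norm_pow, norm_neg, norm_one, one_pow]
      simp [Real.norm_eq_abs, abs_of_nonneg (by positivity : (0:ℝ) ≤ (k:ℝ) + 1)]
    · exact tendsto_one_div_add_atTop_nhds_zero_nat
  exact h.isCompact_insert_range

instance : CompactSpace ↥sigma0 := isCompact_iff_compactSpace.mp sigma0_isCompact


/-- The `BV(σ)` norm-type quantity `sup_{t ∈ σ} |f(t)| + var_σ(f)`. -/
noncomputable def bvNorm (σ : Set ℝ) (f : ℝ → ℂ) : ℝ :=
  sSup ((fun t => ‖f t‖) '' σ) + (eVariationOn f σ).toReal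

/-- A `BV(σ)` extension of the polynomial calculus of a bounded operator `T` on a complex
Banach space `X`: a pair `(Ψ, C')` with `C' > 0`, `Ψ` additive and multiplicative on functions
of bounded variation on `σ`, `‖Ψ(f)‖ ≤ C'·(sup_{t∈σ}|f(t)| + var_σ(f))` for such `f`, and
`Ψ(p) = p(T)` for every polynomial `p`. -/
def HasBVExtension {X : Type*} [NormedAddCommGroup X] [NormedSpace ℂ X]
    (σ : Set ℝ) (T : X →L[ℂ] X) : Prop :=
  ∃ (C' : ℝ) (_ : 0 < C') (Ψ : (ℝ → ℂ) → X →L[ℂ] X),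
    (∀ f g : ℝ → ℂ, BoundedVariationOn f σ → BoundedVariationOn g σ →
      Ψ (f + g) = Ψ f + Ψ g ∧ Ψ (f * g) = (Ψ f).comp (Ψ g)) ∧
    (∀ f : ℝ → ℂ, BoundedVariationOn f σ → ‖Ψ f‖ ≤ C' * bvNorm σ f) ∧
    (∀ p : Polynomial ℂ, Ψ (fun t : ℝ => p.eval (t : ℂ)) = Polynomial.aeval T p)

/-!
A sequence `a : ℓ¹` encodes a function of bounded variation on `σ₀` that is continuous at `0`: its
entries are the value at `0` and the increments between consecutive points on either side of `0`.
Multiplication by the coordinate `t` preserves this space of functions, and the Leibniz rule bounds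
the norm of multiplication by `p` by the supremum plus the variation of `p`.

Each nonzero `l ∈ σ₀` is isolated, so for `f` of bounded variation the slope of `f` at `l` has
bounded variation too. Applying an extension `Ψ` to `f = f l + (t - l) • slope f l` and evaluating
at `l` shows that `Ψ f` acts at `l` as multiplication by `f l`. Hence `Ψ f` maps the constant
function `1` to a function that agrees with `f` off `0`, so every `f` of bounded variation would
have a limit at `0` along `σ₀ \ {0}`. The indicator function of `(0, ∞)` does not.
-/

section BoundedVariation

lemma tsum_edist_le_eVariationOn_of_monotone {α E : Type*} [LinearOrder α] [PseudoEMetricSpace E]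
    (f : α → E) {s : Set α} {u : ℕ → α} (hu : Monotone u) (us : ∀ i, u i ∈ s) :
    ∑' i, edist (f (u i)) (f (u (i + 1))) ≤ eVariationOn f s :=
  ENNReal.tsum_le_of_sum_range_le fun n => by
    simpa only [edist_comm] using eVariationOn.sum_le (f := f) (n := n) hu us

lemma tsum_edist_le_eVariationOn_of_antitone {α E : Type*} [LinearOrder α] [PseudoEMetricSpace E]
    (f : α → E) {s : Set α} {u : ℕ → α} (hu : Antitone u) (us : ∀ i, u i ∈ s) :
    ∑' i, edist (f (u i)) (f (u (i + 1))) ≤ eVariationOn f s := by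
  rw [← eVariationOn.comp_ofDual]
  exact tsum_edist_le_eVariationOn_of_monotone (f ∘ OrderDual.ofDual)
    (u := OrderDual.toDual ∘ u) hu.dual_right us

lemma boundedVariationOn_of_locallyLipschitzOn {E : Type*} [PseudoMetricSpace E] {f : ℝ → E}
    {σ : Set ℝ} (hσ : IsCompact σ) (hf : LocallyLipschitzOn σ f) : BoundedVariationOn f σ := by
  obtain ⟨K, hK⟩ := hf.exists_lipschitzOnWith_of_compact hσ
  obtain ⟨a, ha⟩ := hσ.bddBelow
  obtain ⟨b, hb⟩ := hσ.bddAbove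
  have hid : BoundedVariationOn id σ :=
    (BoundedVariationOn.id_Icc a b).mono fun t ht => ⟨ha ht, hb ht⟩
  exact hK.comp_boundedVariationOn (Set.mapsTo_id σ) hid

lemma boundedVariationOn_polynomial {σ : Set ℝ} (hσ : IsCompact σ) (p : Polynomial ℂ) :
    BoundedVariationOn (fun t : ℝ => p.eval (t : ℂ)) σ := by
  have hp : ContDiff ℝ 1 fun t : ℝ => p.eval (t : ℂ) :=
    (p.contDiff_aeval 1).restrict_scalars ℝ |>.comp Complex.ofRealCLM.contDiff
  exact boundedVariationOn_of_locallyLipschitzOn hσ hp.locallyLipschitz.locallyLipschitzOn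

lemma locallyLipschitzOn_inv_sub_of_not_accPt {σ : Set ℝ} {l : ℝ} (hl : ¬AccPt l (𝓟 σ)) :
    LocallyLipschitzOn σ fun t => (t - l)⁻¹ := by
  intro t _
  obtain rfl | htl := eq_or_ne t l
  -- The function takes the junk value `0⁻¹ = 0` at `l`, which is harmless since `l` is isolated.
  · have hsingle : {t} ∈ 𝓝[σ] t := by
      rw [accPt_iff_frequently, not_frequently] at hl
      filter_upwards [nhdsWithin_le_nhds hl, self_mem_nhdsWithin] with y hy hyσ
      exact not_imp_comm.1 (fun hne => ⟨hne, hyσ⟩) hy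
    exact ⟨0, {t}, hsingle, by simp [LipschitzOnWith]⟩
  · have hdiff : ContDiffAt ℝ 1 (fun t => (t - l)⁻¹) t :=
      (contDiffAt_id.sub contDiffAt_const).inv (sub_ne_zero.2 htl)
    obtain ⟨K, U, hU, hK⟩ := hdiff.exists_lipschitzOnWith
    exact ⟨K, U, nhdsWithin_le_nhds hU, hK⟩

lemma boundedVariationOn_slope_of_not_accPt {E : Type*} [NormedAddCommGroup E] [NormedSpace ℝ E]
    {f : ℝ → E} {σ : Set ℝ} {l : ℝ} (hσ : IsCompact σ) (hl : ¬AccPt l (𝓟 σ))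
    (hf : BoundedVariationOn f σ) : BoundedVariationOn (slope f l) σ := by
  have hinv := boundedVariationOn_of_locallyLipschitzOn hσ
    (locallyLipschitzOn_inv_sub_of_not_accPt hl)
  have hsub : BoundedVariationOn (fun t => f t - f l) σ :=
    (IsometryEquiv.subRight (f l)).isometry.lipschitz.comp_boundedVariationOn hf
  exact hinv.smul hsub

lemma boundedVariationOn_indicator_Ioi_const {α E : Type*} [LinearOrder α]
    [NormedAddCommGroup E] [NormedSpace ℝ E] (a : α) (c : E) (s : Set α) :
    BoundedVariationOn ((Set.Ioi a).indicator fun _ => c) s := by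
  have hmono : Monotone ((Set.Ioi a).indicator fun _ => (1 : ℝ)) := by
    intro x y hxy
    by_cases hx : a < x
    · simp [hx, hx.trans_le hxy]
    · simpa [hx] using Set.indicator_nonneg (fun _ _ => zero_le_one) y
  have hstep : BoundedVariationOn ((Set.Ioi a).indicator fun _ => (1 : ℝ)) s :=
    (hmono.monotoneOn s).boundedVariationOn (C := 1) fun x _ => by
      simpa using norm_indicator_le_norm_self (s := Set.Ioi a) (fun _ => (1 : ℝ)) x
  have hscale : (fun r : ℝ => r • c) ∘ ((Set.Ioi a).indicator fun _ => (1 : ℝ)) =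
      (Set.Ioi a).indicator fun _ => c := by
    ext x
    by_cases hx : x ∈ Set.Ioi a <;> simp [hx]
  exact hscale ▸ (ContinuousLinearMap.toSpanSingleton ℝ c).lipschitz.comp_boundedVariationOn hstep

end BoundedVariation

lemma not_accPt_insert_range_of_tendsto {X : Type*} [TopologicalSpace X] [T2Space X] {u : ℕ → X}
    {x y : X} (hu : Tendsto u atTop (𝓝 x)) (hy : y ≠ x) :
    ¬AccPt y (𝓟 (insert x (Set.range u))) := by
  intro hacc
  obtain ⟨U, V, hU, hV, hUV⟩ := t2_separation_nhds hy
  have hfin : {n | u n ∉ V}.Finite := by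
    rw [← Nat.cofinite_eq_atTop] at hu
    exact hu hV
  refine Set.Infinite.of_accPt (hacc.nhds_inter hU) ((hfin.image u).subset ?_)
  rintro _ ⟨hzU, rfl | ⟨n, rfl⟩⟩
  · exact (hUV.notMem_of_mem_left hzU (mem_of_mem_nhds hV)).elim
  · exact ⟨n, hUV.notMem_of_mem_left hzU, rfl⟩

lemma tsum_indicator_singleton {β E : Type*} [AddCommMonoid E] [TopologicalSpace E]
    (f : β → E) (b : β) : ∑' k, ({b} : Set β).indicator f k = f b := by
  rw [← tsum_subtype, tsum_singleton]

lemma eq_of_tendsto_of_sub_add_two_eq {E : Type*} [AddCommGroup E] [TopologicalSpace E]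
    [IsTopologicalAddGroup E] [T2Space E] {u v : ℕ → E} {c : E} (hu : Tendsto u atTop (𝓝 c))
    (hv : Tendsto v atTop (𝓝 c)) (huv : ∀ n, u n - u (n + 2) = v n - v (n + 2)) : u = v := by
  funext n
  have hconst : ∀ k, u (n + 2 * k) - v (n + 2 * k) = u n - v n := by
    intro k
    induction k with
    | zero => rfl
    | succ k ih =>
      rw [← ih, sub_eq_sub_iff_sub_eq_sub, ← neg_inj, neg_sub, neg_sub]
      exact huv (n + 2 * k)
  have hindex : Tendsto (fun k => n + 2 * k) atTop atTop :=
    tendsto_atTop_mono (fun k => show k ≤ n + 2 * k by omega) tendsto_id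
  have hlim := ((hu.sub hv).comp hindex).congr hconst
  rw [sub_self] at hlim
  exact sub_eq_zero.1 (tendsto_nhds_unique tendsto_const_nhds hlim)

section Eigenfunctional

lemma aeval_apply_of_eigenfunctional {R M : Type*} [CommRing R] [TopologicalSpace M]
    [AddCommGroup M] [IsTopologicalAddGroup M] [Module R M] [ContinuousConstSMul R M]
    {T : M →L[R] M} {φ : M →ₗ[R] R} {l : R} (hφ : ∀ x, φ (T x) = l * φ x)
    (p : Polynomial R) (x : M) : φ (Polynomial.aeval T p x) = p.eval l * φ x := by
  induction p using Polynomial.induction_on generalizing x with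
  | C a => simp [Algebra.algebraMap_eq_smul_one]
  | add p q hp hq => simp [hp, hq, add_mul]
  | monomial n a ih =>
    rw [pow_succ, ← mul_assoc, map_mul, Polynomial.aeval_X, mul_apply_eq_comp, ih, hφ,
      Polynomial.eval_mul_X, mul_assoc]

/-- `Ψ` extends the polynomial calculus of `T` to a ring homomorphism on the functions of bounded
variation on `σ`. This is the algebraic part of `HasBVExtension`: no bound is required of `Ψ`. -/
structure IsAlgebraicBVExtension {X : Type*} [NormedAddCommGroup X] [NormedSpace ℂ X]
    (σ : Set ℝ) (T : X →L[ℂ] X) (Ψ : (ℝ → ℂ) → X →L[ℂ] X) : Prop where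
  map_add : ∀ f g : ℝ → ℂ, BoundedVariationOn f σ → BoundedVariationOn g σ → Ψ (f + g) = Ψ f + Ψ g
  map_mul : ∀ f g : ℝ → ℂ, BoundedVariationOn f σ → BoundedVariationOn g σ →
    Ψ (f * g) = (Ψ f).comp (Ψ g)
  map_polynomial : ∀ p : Polynomial ℂ, Ψ (fun t : ℝ => p.eval (t : ℂ)) = Polynomial.aeval T p

theorem IsAlgebraicBVExtension.apply_of_eigenfunctional {X : Type*} [NormedAddCommGroup X]
    [NormedSpace ℂ X] {σ : Set ℝ} {T : X →L[ℂ] X} {Ψ : (ℝ → ℂ) → X →L[ℂ] X}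
    (hΨ : IsAlgebraicBVExtension σ T Ψ) (hσ : IsCompact σ) {l : ℝ} (hl : ¬AccPt l (𝓟 σ))
    {φ : X →ₗ[ℂ] ℂ} (hφ : ∀ x, φ (T x) = l * φ x) {f : ℝ → ℂ} (hf : BoundedVariationOn f σ)
    (x : X) : φ (Ψ f x) = f l * φ x := by
  let c : Polynomial ℂ := Polynomial.C (f l)
  let q : Polynomial ℂ := Polynomial.X - Polynomial.C (l : ℂ)
  have hslope := boundedVariationOn_slope_of_not_accPt hσ hl hf
  have hc := boundedVariationOn_polynomial hσ c
  have hq := boundedVariationOn_polynomial hσ q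
  have hfactor : f = (fun t : ℝ => c.eval (t : ℂ)) + (fun t : ℝ => q.eval (t : ℂ)) * slope f l := by
    ext t
    have := sub_smul_slope f l t
    rw [Complex.real_smul, Complex.ofReal_sub, vsub_eq_sub] at this
    simp [c, q, this]
  have hΨf : Ψ f = Polynomial.aeval T c + (Polynomial.aeval T q).comp (Ψ (slope f l)) := by
    conv_lhs => rw [hfactor]
    rw [hΨ.map_add _ _ hc (by simpa only [smul_eq_mul] using hq.smul hslope),
      hΨ.map_mul _ _ hq hslope, hΨ.map_polynomial, hΨ.map_polynomial]
  rw [hΨf, add_apply, ContinuousLinearMap.comp_apply, _root_.map_add,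
    aeval_apply_of_eigenfunctional hφ, aeval_apply_of_eigenfunctional hφ]
  simp [c, q]

end Eigenfunctional

section Nodes

/-- The `n`-th nonzero point of `σ₀`, counted from `n = 0`. The points of even index are negative
and increase to `0`, those of odd index are positive and decrease to `0`. -/
noncomputable def node (n : ℕ) : ℝ := (-1) ^ (n + 1) / (n + 1)

lemma sigma0_eq_insert_range_node : sigma0 = insert 0 (Set.range node) := sigma0_eq

lemma node_mem_sigma0 (n : ℕ) : node n ∈ sigma0 :=
  sigma0_eq_insert_range_node ▸ Or.inr ⟨n, rfl⟩

lemma node_even (i : ℕ) : node (2 * i) = -(1 / (2 * i + 1)) := by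
  simp [node, pow_succ, neg_div]

lemma node_odd (i : ℕ) : node (2 * i + 1) = 1 / (2 * i + 2) := by
  simp only [node, pow_succ, pow_mul]
  push_cast
  ring

lemma node_even_neg (i : ℕ) : node (2 * i) < 0 := by
  rw [node_even, neg_lt_zero]
  positivity

lemma node_odd_pos (i : ℕ) : 0 < node (2 * i + 1) := by
  rw [node_odd]
  positivity

lemma node_ne_zero (n : ℕ) : node n ≠ 0 :=
  div_ne_zero (pow_ne_zero _ (neg_ne_zero.2 one_ne_zero)) (Nat.cast_add_one_ne_zero n)

lemma monotone_node_even : Monotone fun i => node (2 * i) := by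
  intro i j hij
  simp only [node_even]
  gcongr

lemma antitone_node_odd : Antitone fun i => node (2 * i + 1) := by
  intro i j hij
  simp only [node_odd]
  gcongr

lemma tendsto_node : Tendsto node atTop (𝓝 0) := by
  refine squeeze_zero_norm (fun n => ?_) (tendsto_one_div_add_atTop_nhds_zero_nat (𝕜 := ℝ))
  rw [node, norm_div, norm_pow, norm_neg, norm_one, one_pow, Real.norm_of_nonneg (by positivity)]

lemma not_accPt_node (n : ℕ) : ¬AccPt (node n) (𝓟 sigma0) :=
  sigma0_eq_insert_range_node ▸ not_accPt_insert_range_of_tendsto tendsto_node (node_ne_zero n)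

lemma tsum_edist_node_le_eVariationOn {E : Type*} [PseudoEMetricSpace E] (f : ℝ → E) :
    ∑' n, edist (f (node n)) (f (node (n + 2))) ≤ eVariationOn f sigma0 := by
  have hneg : ∑' i, edist (f (node (2 * i))) (f (node (2 * i + 2))) ≤
      eVariationOn f (sigma0 ∩ Set.Iio 0) :=
    tsum_edist_le_eVariationOn_of_monotone f monotone_node_even
      fun i => ⟨node_mem_sigma0 _, node_even_neg i⟩
  have hpos : ∑' i, edist (f (node (2 * i + 1))) (f (node (2 * i + 1 + 2))) ≤
      eVariationOn f (sigma0 ∩ Set.Ioi 0) :=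
    tsum_edist_le_eVariationOn_of_antitone f antitone_node_odd
      fun i => ⟨node_mem_sigma0 _, node_odd_pos i⟩
  rw [← tsum_even_add_odd ENNReal.summable ENNReal.summable]
  calc _ ≤ eVariationOn f (sigma0 ∩ Set.Iio 0) + eVariationOn f (sigma0 ∩ Set.Ioi 0) :=
        add_le_add hneg hpos
    _ ≤ eVariationOn f (sigma0 ∩ Set.Iio 0 ∪ sigma0 ∩ Set.Ioi 0) :=
        eVariationOn.add_le_union f fun _ hx _ hy => (hx.2.trans hy.2).le
    _ ≤ eVariationOn f sigma0 :=
        eVariationOn.mono f (Set.union_subset Set.inter_subset_left Set.inter_subset_left)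

lemma summable_dist_node {E : Type*} [PseudoMetricSpace E] {f : ℝ → E}
    (hf : BoundedVariationOn f sigma0) :
    Summable fun n => dist (f (node n)) (f (node (n + 2))) := by
  simp only [dist_edist]
  exact ENNReal.summable_toReal (ne_top_of_le_ne_top hf (tsum_edist_node_le_eVariationOn f))

lemma tsum_dist_node_le {E : Type*} [PseudoMetricSpace E] {f : ℝ → E}
    (hf : BoundedVariationOn f sigma0) :
    ∑' n, dist (f (node n)) (f (node (n + 2))) ≤ (eVariationOn f sigma0).toReal := by
  simp only [dist_edist]
  rw [← ENNReal.tsum_toReal_eq fun _ => edist_ne_top _ _]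
  exact ENNReal.toReal_mono hf (tsum_edist_node_le_eVariationOn f)

end Nodes

section NodeEval

open scoped lp

lemma l1_norm_eq_add_tsum (a : ℓ¹(ℕ, ℂ)) : ‖a‖ = ‖a 0‖ + ∑' n, ‖a (n + 1)‖ := by
  rw [← a.2.summable_of_one.norm.tsum_eq_zero_add]
  simpa using lp.norm_eq_tsum_rpow (p := 1) (by simp) a

/-- The indices of the entries of `a : ℓ¹` that add up to `nodeEval n a`. -/
def nodeSupport (n : ℕ) : Set ℕ := {k | k = 0 ∨ n < k ∧ Odd (n + k)}

/-- The value at `node n` of the function on `σ₀` encoded by `a : ℓ¹`. The encoding identifies `ℓ¹`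
with the functions of bounded variation on `σ₀` that are continuous at `0`: the entry `a 0` is the
value at `0`, and `a (n + 1)` is the difference of the values at `node n` and at `node (n + 2)`, the
next node towards `0` on the same side. -/
noncomputable def nodeEval (n : ℕ) : ℓ¹(ℕ, ℂ) →ₗ[ℂ] ℂ where
  toFun a := ∑' k, (nodeSupport n).indicator a k
  map_add' a b := by
    simp only [lp.coeFn_add, Set.indicator_add', Pi.add_apply]
    exact (a.2.summable_of_one.indicator _).tsum_add (b.2.summable_of_one.indicator _)
  map_smul' c a := by
    simp only [lp.coeFn_smul, Set.indicator_const_smul_apply, Pi.smul_def, RingHom.id_apply]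
    exact tsum_const_smul'' c

lemma nodeEval_apply (n : ℕ) (a : ℓ¹(ℕ, ℂ)) :
    nodeEval n a = ∑' k, (nodeSupport n).indicator a k := rfl

lemma norm_nodeEval_le (n : ℕ) (a : ℓ¹(ℕ, ℂ)) : ‖nodeEval n a‖ ≤ ‖a‖ := by
  have ha := a.2.summable_of_one
  calc ‖nodeEval n a‖ ≤ ∑' k, ‖(nodeSupport n).indicator a k‖ :=
        norm_tsum_le_tsum_norm (ha.indicator _).norm
    _ ≤ ∑' k, ‖a k‖ :=
        (ha.indicator _).norm.tsum_le_tsum (norm_indicator_le_norm_self a) ha.norm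
    _ = ‖a‖ := by rw [ha.norm.tsum_eq_zero_add, l1_norm_eq_add_tsum]

lemma nodeSupport_eq_insert (n : ℕ) : nodeSupport n = insert (n + 1) (nodeSupport (n + 2)) := by
  ext k
  simp only [nodeSupport, Set.mem_insert_iff, Set.mem_ofPred_eq, Nat.odd_iff]
  omega

lemma add_one_notMem_nodeSupport_add_two (n : ℕ) : n + 1 ∉ nodeSupport (n + 2) := by
  simp only [nodeSupport, Set.mem_ofPred_eq]
  omega

lemma nodeEval_sub_nodeEval_add_two (n : ℕ) (a : ℓ¹(ℕ, ℂ)) :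
    nodeEval n a - nodeEval (n + 2) a = a (n + 1) := by
  have ha := a.2.summable_of_one
  have hdisj := Set.disjoint_singleton_left.2 (add_one_notMem_nodeSupport_add_two n)
  rw [sub_eq_iff_eq_add, nodeEval_apply, nodeEval_apply, nodeSupport_eq_insert, Set.insert_eq,
    Set.indicator_union_of_disjoint hdisj, (ha.indicator _).tsum_add (ha.indicator _),
    tsum_indicator_singleton a (n + 1)]

lemma tendsto_nodeEval (a : ℓ¹(ℕ, ℂ)) : Tendsto (fun n => nodeEval n a) atTop (𝓝 (a 0)) := by
  have hpointwise : ∀ k, Tendsto (fun n => (nodeSupport n).indicator a k) atTop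
      (𝓝 (({0} : Set ℕ).indicator a k)) := by
    refine fun k => tendsto_const_nhds.congr' ?_
    filter_upwards [eventually_ge_atTop k] with n hn
    have hmem : k ∈ nodeSupport n ↔ k = 0 := by
      simp [nodeSupport, hn.not_gt]
    obtain rfl | hk := eq_or_ne k 0
    · simp [hmem.2 rfl]
    · simp [hk, mt hmem.1 hk]
  rw [← tsum_indicator_singleton a 0]
  exact tendsto_tsum_of_dominated_convergence a.2.summable_of_one.norm hpointwise
    (.of_forall fun n k => norm_indicator_le_norm_self a k)

lemma nodeEval_single_zero (n : ℕ) (c : ℂ) : nodeEval n (lp.single 1 0 c) = c := by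
  rw [nodeEval_apply, tsum_eq_single 0 fun k hk => ?_]
  · simp [nodeSupport]
  · simp [hk]

lemma ext_nodeEval {a b : ℓ¹(ℕ, ℂ)} (hab : ∀ n, nodeEval n a = nodeEval n b) : a = b := by
  ext n
  cases n with
  | zero => exact tendsto_nhds_unique ((tendsto_nodeEval a).congr hab) (tendsto_nodeEval b)
  | succ n => rw [← nodeEval_sub_nodeEval_add_two, ← nodeEval_sub_nodeEval_add_two, hab, hab]

lemma exists_nodeEval_eq {h : ℕ → ℂ} {c : ℂ} (hlim : Tendsto h atTop (𝓝 c))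
    (hsum : Summable fun n => dist (h n) (h (n + 2))) :
    ∃ a : ℓ¹(ℕ, ℂ), ∀ n, nodeEval n a = h n := by
  let entries : ℕ → ℂ := fun n => n.casesOn c fun n => h n - h (n + 2)
  have hentries : Memℓp entries 1 := by
    refine memℓp_gen ((summable_nat_add_iff 1).1 ?_)
    simpa [entries, dist_eq_norm] using hsum
  let a : ℓ¹(ℕ, ℂ) := ⟨entries, hentries⟩
  exact ⟨a, congrFun <| eq_of_tendsto_of_sub_add_two_eq (tendsto_nodeEval a) hlim
    fun n => nodeEval_sub_nodeEval_add_two n a⟩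

end NodeEval

section Multiplier

open scoped lp

variable {z : ℕ → ℂ} {M : ℝ}

lemma dist_mul_nodeEval_le (hM : ∀ n, ‖z n‖ ≤ M) (a : ℓ¹(ℕ, ℂ)) (n : ℕ) :
    dist (z n * nodeEval n a) (z (n + 2) * nodeEval (n + 2) a) ≤
      M * ‖a (n + 1)‖ + dist (z n) (z (n + 2)) * ‖a‖ := by
  have hleibniz : z n * nodeEval n a - z (n + 2) * nodeEval (n + 2) a =
      z n * a (n + 1) + (z n - z (n + 2)) * nodeEval (n + 2) a := by
    rw [← nodeEval_sub_nodeEval_add_two]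
    ring
  rw [dist_eq_norm, dist_eq_norm, hleibniz]
  refine (norm_add_le _ _).trans ?_
  rw [norm_mul, norm_mul]
  gcongr
  · exact hM n
  · exact norm_nodeEval_le _ _

lemma hasSum_mul_norm_add_dist_mul (M : ℝ) (hz : Summable fun n => dist (z n) (z (n + 2)))
    (a : ℓ¹(ℕ, ℂ)) :
    HasSum (fun n => M * ‖a (n + 1)‖ + dist (z n) (z (n + 2)) * ‖a‖)
      (M * ∑' n, ‖a (n + 1)‖ + (∑' n, dist (z n) (z (n + 2))) * ‖a‖) :=
  (((summable_nat_add_iff 1).2 a.2.summable_of_one.norm).hasSum.mul_left M).add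
    (hz.hasSum.mul_right ‖a‖)

lemma norm_le_of_nodeEval_eq_mul (hM : ∀ n, ‖z n‖ ≤ M)
    (hz : Summable fun n => dist (z n) (z (n + 2))) {a b : ℓ¹(ℕ, ℂ)}
    (hab : ∀ n, nodeEval n b = z n * nodeEval n a) :
    ‖b‖ ≤ (M + ∑' n, dist (z n) (z (n + 2))) * ‖a‖ := by
  have hzero : ‖b 0‖ ≤ M * ‖a 0‖ := by
    refine le_of_tendsto_of_tendsto' (tendsto_nodeEval b).norm
      ((tendsto_nodeEval a).norm.const_mul M) fun n => ?_
    rw [hab, norm_mul]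
    gcongr
    exact hM n
  have hsucc : ∑' n, ‖b (n + 1)‖ ≤
      M * ∑' n, ‖a (n + 1)‖ + (∑' n, dist (z n) (z (n + 2))) * ‖a‖ := by
    refine hasSum_le (fun n => ?_) ((summable_nat_add_iff 1).2 b.2.summable_of_one.norm).hasSum
      (hasSum_mul_norm_add_dist_mul M hz a)
    rw [← nodeEval_sub_nodeEval_add_two, hab, hab, ← dist_eq_norm]
    exact dist_mul_nodeEval_le hM a n
  calc ‖b‖ = ‖b 0‖ + ∑' n, ‖b (n + 1)‖ := l1_norm_eq_add_tsum b
    _ ≤ M * ‖a 0‖ + (M * ∑' n, ‖a (n + 1)‖ + (∑' n, dist (z n) (z (n + 2))) * ‖a‖) :=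
        add_le_add hzero hsucc
    _ = (M + ∑' n, dist (z n) (z (n + 2))) * ‖a‖ := by
        rw [add_mul, ← add_assoc, ← mul_add, ← l1_norm_eq_add_tsum]

theorem exists_nodeEval_multiplier {c : ℂ} (hlim : Tendsto z atTop (𝓝 c))
    (hz : Summable fun n => dist (z n) (z (n + 2))) :
    ∃ T : ℓ¹(ℕ, ℂ) →L[ℂ] ℓ¹(ℕ, ℂ), ∀ n a, nodeEval n (T a) = z n * nodeEval n a := by
  obtain ⟨M, hM⟩ := hlim.norm.bddAbove_range
  replace hM : ∀ n, ‖z n‖ ≤ M := fun n => hM ⟨n, rfl⟩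
  have hexists : ∀ a, ∃ b, ∀ n, nodeEval n b = z n * nodeEval n a := fun a =>
    exists_nodeEval_eq (hlim.mul (tendsto_nodeEval a)) <|
      .of_nonneg_of_le (fun _ => dist_nonneg) (dist_mul_nodeEval_le hM a)
        (hasSum_mul_norm_add_dist_mul M hz a).summable
  choose T hT using hexists
  let Tₗ : ℓ¹(ℕ, ℂ) →ₗ[ℂ] ℓ¹(ℕ, ℂ) :=
    { toFun := T
      map_add' := fun a b => ext_nodeEval fun n => by
        simp only [map_add, hT, mul_add]
      map_smul' := fun r a => ext_nodeEval fun n => by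
        simp only [map_smul, hT, smul_eq_mul, RingHom.id_apply, mul_left_comm] }
  exact ⟨Tₗ.mkContinuous _ fun a => norm_le_of_nodeEval_eq_mul hM hz (hT a), fun n a => hT a n⟩

end Multiplier

section Counterexample

open scoped lp

variable {T : ℓ¹(ℕ, ℂ) →L[ℂ] ℓ¹(ℕ, ℂ)}

theorem norm_aeval_le_bvNorm (hT : ∀ n a, nodeEval n (T a) = node n * nodeEval n a)
    (p : Polynomial ℂ) :
    ‖Polynomial.aeval T p‖ ≤ bvNorm sigma0 (fun t : ℝ => p.eval (t : ℂ)) := by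
  set f : ℝ → ℂ := fun t => p.eval (t : ℂ)
  have hf : BoundedVariationOn f sigma0 := boundedVariationOn_polynomial sigma0_isCompact p
  have hbdd : BddAbove ((fun t => ‖f t‖) '' sigma0) :=
    (sigma0_isCompact.image (by fun_prop)).bddAbove
  have hsup : ∀ n, ‖f (node n)‖ ≤ sSup ((fun t => ‖f t‖) '' sigma0) := fun n =>
    le_csSup hbdd ⟨node n, node_mem_sigma0 n, rfl⟩
  have hnonneg : 0 ≤ bvNorm sigma0 f :=
    add_nonneg ((norm_nonneg _).trans (hsup 0)) ENNReal.toReal_nonneg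
  refine ContinuousLinearMap.opNorm_le_bound _ hnonneg fun a => ?_
  calc ‖Polynomial.aeval T p a‖
      ≤ (sSup ((fun t => ‖f t‖) '' sigma0) + ∑' n, dist (f (node n)) (f (node (n + 2)))) * ‖a‖ :=
        norm_le_of_nodeEval_eq_mul hsup (summable_dist_node hf) fun n =>
          aeval_apply_of_eigenfunctional (hT n) p a
    _ ≤ bvNorm sigma0 f * ‖a‖ := by
        unfold bvNorm
        gcongr
        exact tsum_dist_node_le hf

theorem IsAlgebraicBVExtension.exists_tendsto_node {Ψ : (ℝ → ℂ) → ℓ¹(ℕ, ℂ) →L[ℂ] ℓ¹(ℕ, ℂ)}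
    (hΨ : IsAlgebraicBVExtension sigma0 T Ψ)
    (hT : ∀ n a, nodeEval n (T a) = node n * nodeEval n a) {f : ℝ → ℂ}
    (hf : BoundedVariationOn f sigma0) : ∃ c, Tendsto (fun n => f (node n)) atTop (𝓝 c) := by
  let one : ℓ¹(ℕ, ℂ) := lp.single 1 0 1
  refine ⟨Ψ f one 0, (tendsto_nodeEval (Ψ f one)).congr fun n => ?_⟩
  rw [hΨ.apply_of_eigenfunctional sigma0_isCompact (not_accPt_node n) (hT n) hf,
    nodeEval_single_zero, mul_one]

lemma not_tendsto_indicator_Ioi_node (c : ℂ) :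
    ¬Tendsto (fun n => (Set.Ioi (0 : ℝ)).indicator (fun _ => (1 : ℂ)) (node n)) atTop (𝓝 c) := by
  intro hlim
  have heven : Tendsto (fun i : ℕ => 2 * i) atTop atTop :=
    tendsto_atTop_mono (fun i => show i ≤ 2 * i by omega) tendsto_id
  have hodd : Tendsto (fun i : ℕ => 2 * i + 1) atTop atTop :=
    tendsto_atTop_mono (fun i => show i ≤ 2 * i + 1 by omega) tendsto_id
  have hzero : c = 0 := tendsto_nhds_unique (hlim.comp heven) <|
    tendsto_const_nhds.congr fun i => by simp [(node_even_neg i).le]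
  have hone : c = 1 := tendsto_nhds_unique (hlim.comp hodd) <|
    tendsto_const_nhds.congr fun i => by simp [node_odd_pos i]
  exact zero_ne_one (hzero.symm.trans hone)

theorem stmt5_general :
    ∃ T : ℓ¹(ℕ, ℂ) →L[ℂ] ℓ¹(ℕ, ℂ),
      (∀ p : Polynomial ℂ,
        ‖Polynomial.aeval T p‖ ≤ bvNorm sigma0 (fun t : ℝ => p.eval (t : ℂ))) ∧
      ¬∃ Ψ, IsAlgebraicBVExtension sigma0 T Ψ := by
  have hnode : BoundedVariationOn (fun t : ℝ => (t : ℂ)) sigma0 := by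
    simpa using boundedVariationOn_polynomial sigma0_isCompact Polynomial.X
  have hlim : Tendsto (fun n => (node n : ℂ)) atTop (𝓝 (0 : ℝ)) := tendsto_node.ofReal
  obtain ⟨T, hT⟩ := exists_nodeEval_multiplier hlim (summable_dist_node hnode)
  refine ⟨T, norm_aeval_le_bvNorm hT, fun ⟨Ψ, hΨ⟩ => ?_⟩
  obtain ⟨c, hc⟩ := hΨ.exists_tendsto_node hT (boundedVariationOn_indicator_Ioi_const 0 1 sigma0)
  exact not_tendsto_indicator_Ioi_node c hc

end Counterexample

/-- There exist a bounded linear operator `T` on `ℓ¹` and a constant `C > 0`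
such that `‖p(T)‖ ≤ C·(sup_{t∈σ₀}|p(t)| + var_{σ₀}(p))` for every complex polynomial `p`, yet
there is no `BV(σ₀)` extension of the polynomial calculus of `T`. -/
theorem stmt5 :
    ∃ (T : lp (fun _ : ℕ => ℂ) 1 →L[ℂ] lp (fun _ : ℕ => ℂ) 1) (C : ℝ), 0 < C ∧
      (∀ p : Polynomial ℂ,
        ‖(Polynomial.aeval T p : lp (fun _ : ℕ => ℂ) 1 →L[ℂ] lp (fun _ : ℕ => ℂ) 1)‖ ≤
          C * bvNorm sigma0 (fun t : ℝ => p.eval (t : ℂ))) ∧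
      ¬ HasBVExtension sigma0 T := by
  obtain ⟨T, hT, hext⟩ := stmt5_general
  exact ⟨T, 1, one_pos, by simpa only [one_mul] using hT, fun ⟨_, _, Ψ, hΨ, _, hp⟩ =>
    hext ⟨Ψ, fun f g hf hg => (hΨ f g hf hg).1, fun f g hf hg => (hΨ f g hf hg).2, hp⟩⟩
end

section
/- Let X be a complex Banach space that contains a complemented closed subspace isomorphic (as a Banach space) either to c₀ (the space of complex sequences converging to 0, with the supremum norm) or to ℓ¹ (the space of absolutely summable complex sequences). Then there exist a compact set σ ⊆ ℝ, a bounded linear operator T on X, and a constant C > 0 such that ‖p(T)‖ ≤ C·(sup_{t∈σ}|p(t)| + var_σ(p)) for every polynomial p with complex coefficients, yet no BV(σ) extension of the polynomial calculus of T exists. -/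
open MeasureTheory Filter Topology ZeroAtInfty

/-!
Suppose that `T` has eigenfunctionals `φ k` with eigenvalues `s k`, taking both signs infinitely
often, and that `φ k` converges pointwise to `φ₀ ≠ 0`. If `Ψ` is a `BV(σ)` calculus for `T` and `χ`
the indicator of `(0, ∞)`, then `χ` is constant near each `s k ≠ 0`, so `χ - χ (s k)` is divisible
by `t - s k` in `BV(σ)` and `φ k ∘ Ψ χ = χ (s k) • φ k`. Letting `k → ∞` through either sign gives
both `φ₀ ∘ Ψ χ = φ₀` and `φ₀ ∘ Ψ χ = 0`, a contradiction.

Such operators with a bounded polynomial calculus exist on `c₀` and on `ℓ¹`, with eigenvalues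
`(-1) ^ k / k` for `k ≥ 1`. On `c₀` the eigenfunctionals are `x ↦ x 0 + x k`; on `ℓ¹` they
are `x ↦ x 0 + ∑ j, x (k + 2 * j)`, and the variation of `p` along the even and along the odd
`k` is what bounds the coordinates of `p(T) x`. Extending by `0` on a complement keeps all this.
-/

theorem boundedVariationOn_add {α E : Type*} [LinearOrder α] [SeminormedAddCommGroup E]
    {f g : α → E} {s : Set α} (hf : BoundedVariationOn f s) (hg : BoundedVariationOn g s) :
    BoundedVariationOn (f + g) s := by
  refine ne_top_of_le_ne_top (ENNReal.add_ne_top.mpr ⟨hf, hg⟩) (iSup_le fun ⟨n, u, hu, us⟩ => ?_)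
  calc ∑ i ∈ Finset.range n, edist ((f + g) (u (i + 1))) ((f + g) (u i))
      ≤ ∑ i ∈ Finset.range n, (edist (f (u (i + 1))) (f (u i)) + edist (g (u (i + 1))) (g (u i))) :=
        Finset.sum_le_sum fun _ _ => edist_add_add_le _ _ _ _
    _ ≤ eVariationOn f s + eVariationOn g s := by
        rw [Finset.sum_add_distrib]
        exact add_le_add (eVariationOn.sum_le hu us) (eVariationOn.sum_le hu us)

theorem lipschitzOnWith_inv_of_le_norm {𝕜 : Type*} [NormedDivisionRing 𝕜] {δ : ℝ} (hδ : 0 < δ) :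
    LipschitzOnWith (Real.toNNReal (δ * δ)⁻¹) (·⁻¹) {z : 𝕜 | δ ≤ ‖z‖} := by
  refine LipschitzOnWith.of_dist_le' fun z hz w hw => ?_
  have hz' : z ≠ 0 := norm_pos_iff.mp (hδ.trans_le hz)
  have hw' : w ≠ 0 := norm_pos_iff.mp (hδ.trans_le hw)
  rw [dist_inv_inv₀ hz' hw', div_eq_inv_mul]
  have : δ * δ ≤ ‖z‖ * ‖w‖ := mul_le_mul hz hw hδ.le (norm_nonneg z)
  gcongr

theorem boundedVariationOn_inv {α 𝕜 : Type*} [LinearOrder α] [NormedDivisionRing 𝕜]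
    {f : α → 𝕜} {s : Set α} {δ : ℝ} (hδ : 0 < δ) (hfδ : ∀ t ∈ s, δ ≤ ‖f t‖)
    (hf : BoundedVariationOn f s) : BoundedVariationOn f⁻¹ s :=
  (lipschitzOnWith_inv_of_le_norm hδ).comp_boundedVariationOn hfδ hf

theorem norm_le_bvNorm {σ : Set ℝ} {f : ℝ → ℂ} (hf : BoundedVariationOn f σ) {t : ℝ}
    (ht : t ∈ σ) : ‖f t‖ ≤ bvNorm σ f := by
  have hbdd : BddAbove ((fun t => ‖f t‖) '' σ) := by
    refine ⟨‖f t‖ + (eVariationOn f σ).toReal, ?_⟩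
    rintro _ ⟨r, hr, rfl⟩
    exact norm_le_norm_add_norm_sub' (f r) (f t) |>.trans
      (by gcongr; exact dist_eq_norm (f r) (f t) ▸ hf.dist_le hr ht)
  exact (le_csSup hbdd ⟨t, ht, rfl⟩).trans (le_add_of_nonneg_right ENNReal.toReal_nonneg)

theorem bvNorm_nonneg (σ : Set ℝ) (f : ℝ → ℂ) : 0 ≤ bvNorm σ f :=
  add_nonneg (Real.sSup_nonneg (by rintro _ ⟨t, _, rfl⟩; exact norm_nonneg _))
    ENNReal.toReal_nonneg

theorem toReal_eVariationOn_le_bvNorm (σ : Set ℝ) (f : ℝ → ℂ) :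
    (eVariationOn f σ).toReal ≤ bvNorm σ f :=
  le_add_of_nonneg_left (Real.sSup_nonneg (by rintro _ ⟨t, _, rfl⟩; exact norm_nonneg _))

/-- The algebra of functions of bounded variation on `σ`. Its elements are functions on all of
`ℝ`: two of them that agree on `σ` are not identified. -/
def bvSubalgebra (σ : Set ℝ) : Subalgebra ℂ (ℝ → ℂ) where
  carrier := {f | BoundedVariationOn f σ}
  mul_mem' hf hg := hf.smul hg
  add_mem' hf hg := boundedVariationOn_add hf hg
  algebraMap_mem' c := by
    have hc : ((algebraMap ℂ (ℝ → ℂ) c) '' σ).Subsingleton :=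
      Set.subsingleton_singleton.anti (t := {c}) (Set.image_subset_iff.mpr fun _ _ => rfl)
    exact (eVariationOn.constant_on hc).trans_ne ENNReal.zero_ne_top

theorem ofReal_comp_mem_bvSubalgebra {σ : Set ℝ} {g : ℝ → ℝ} (hg : BoundedVariationOn g σ) :
    (fun t => (g t : ℂ)) ∈ bvSubalgebra σ :=
  Complex.isometry_ofReal.lipschitz.comp_boundedVariationOn hg

theorem ofReal_mem_bvSubalgebra {σ : Set ℝ} (hσ : Bornology.IsBounded σ) :
    (fun t : ℝ => (t : ℂ)) ∈ bvSubalgebra σ := by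
  obtain ⟨r, hr⟩ := hσ.subset_closedBall 0
  rw [Real.closedBall_eq_Icc] at hr
  exact ofReal_comp_mem_bvSubalgebra ((BoundedVariationOn.id_Icc _ _).mono hr)

theorem eval_mem_bvSubalgebra {σ : Set ℝ} (hσ : Bornology.IsBounded σ) (p : Polynomial ℂ) :
    (fun t : ℝ => p.eval (t : ℂ)) ∈ bvSubalgebra σ := by
  have hp : (fun t : ℝ => p.eval (t : ℂ)) = Polynomial.aeval (fun t : ℝ => (t : ℂ)) p := by
    simp only [Polynomial.aeval_pi_apply, Polynomial.coe_aeval_eq_eval]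
  rw [hp]
  exact Algebra.adjoin_singleton_le (ofReal_mem_bvSubalgebra hσ)
    (Polynomial.aeval_mem_adjoin_singleton ℂ _)

section Operators

variable {X Y : Type*} [NormedAddCommGroup X] [NormedSpace ℂ X]
  [NormedAddCommGroup Y] [NormedSpace ℂ Y]

/-- `T` has a `BV(σ)` functional calculus in the purely algebraic sense: a unital homomorphism,
subject to no norm bound, that maps the identity function to `T`. -/
def HasBVAlgHom (σ : Set ℝ) (T : X →L[ℂ] X) : Prop :=
  ∃ (Ψ : bvSubalgebra σ →ₐ[ℂ] (X →L[ℂ] X)) (hι : (fun t : ℝ => (t : ℂ)) ∈ bvSubalgebra σ),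
    Ψ ⟨_, hι⟩ = T

theorem HasBVExtension.hasBVAlgHom {σ : Set ℝ} {T : X →L[ℂ] X} (h : HasBVExtension σ T)
    (hσ : Bornology.IsBounded σ) : HasBVAlgHom σ T := by
  obtain ⟨-, -, Ψ, hΨ, -, hp⟩ := h
  have hΨ_const (c : ℂ) : Ψ (algebraMap ℂ (ℝ → ℂ) c) = algebraMap ℂ (X →L[ℂ] X) c := by
    have hc := hp (Polynomial.C c)
    rw [Polynomial.aeval_C] at hc
    rw [← hc]
    congr 1
    ext
    simp
  refine ⟨{ toFun f := Ψ f
            map_one' := by simpa using hΨ_const 1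
            map_mul' f g := (hΨ f g f.2 g.2).2
            map_zero' := by simpa using hΨ_const 0
            map_add' f g := (hΨ f g f.2 g.2).1
            commutes' := hΨ_const }, ofReal_mem_bvSubalgebra hσ, ?_⟩
  simpa using hp Polynomial.X

theorem exists_sub_mul_eq_sub_of_eventuallyEq {σ : Set ℝ}
    (hι : (fun t : ℝ => (t : ℂ)) ∈ bvSubalgebra σ) {f : ℝ → ℂ} (hf : f ∈ bvSubalgebra σ)
    {s : ℝ} {c : ℂ} (hfs : ∀ᶠ t in 𝓝 s, f t = c) :
    ∃ h ∈ bvSubalgebra σ, ∀ t : ℝ, ((t : ℂ) - s) * h t = f t - c := by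
  obtain ⟨δ, hδ, hfδ⟩ := Metric.eventually_nhds_iff.mp hfs
  -- `u` is the distance to `s`, cut off from below so that it becomes invertible in `BV(σ)`.
  let u : ℝ → ℂ := fun t => (max ‖(t : ℂ) - s‖ δ : ℝ)
  have hu : u ∈ bvSubalgebra σ := by
    have hlip : LipschitzWith 1 fun z : ℂ => max ‖z - s‖ δ := by
      simpa [dist_eq_norm] using (LipschitzWith.dist_left (s : ℂ)).max_const δ
    exact ofReal_comp_mem_bvSubalgebra (hlip.comp_boundedVariationOn hι)
  have hδu (t : ℝ) : δ ≤ ‖u t‖ := by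
    rw [Complex.norm_real]
    exact (le_max_right _ _).trans (Real.le_norm_self _)
  have hu_inv : u⁻¹ ∈ bvSubalgebra σ := boundedVariationOn_inv hδ (fun t _ => hδu t) hu
  refine ⟨(f - algebraMap ℂ _ c) * ((fun t : ℝ => (t : ℂ)) - algebraMap ℂ _ (s : ℂ)) * u⁻¹ ^ 2,
    mul_mem (mul_mem (sub_mem hf (algebraMap_mem _ c)) (sub_mem hι (algebraMap_mem _ _)))
      (pow_mem hu_inv 2), fun t => ?_⟩
  by_cases hft : f t = c
  · simp [hft]
  · have hst : δ ≤ ‖(t : ℂ) - s‖ := by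
      contrapose! hft
      refine hfδ ?_
      rwa [dist_eq_norm, ← Complex.norm_real, Complex.ofReal_sub]
    have hu_sq : u t ^ 2 = ((t : ℂ) - s) ^ 2 := by
      simp only [u, max_eq_left hst]
      rw [← Complex.ofReal_sub, Complex.norm_real, ← Complex.ofReal_pow, Real.norm_eq_abs, sq_abs,
        Complex.ofReal_pow]
    have hts : (t : ℂ) - s ≠ 0 := norm_pos_iff.mp (hδ.trans_le hst)
    simp only [Pi.mul_apply, Pi.sub_apply, Pi.pow_apply, Pi.inv_apply, Pi.algebraMap_apply,
      Algebra.algebraMap_self, RingHom.id_apply, inv_pow, hu_sq]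
    field_simp

theorem apply_algHom_apply_of_eventuallyEq {σ : Set ℝ} {Ψ : bvSubalgebra σ →ₐ[ℂ] (X →L[ℂ] X)}
    {hι : (fun t : ℝ => (t : ℂ)) ∈ bvSubalgebra σ} {φ : X →L[ℂ] ℂ} {s : ℝ}
    (hφ : ∀ x, φ (Ψ ⟨_, hι⟩ x) = s * φ x) {f : bvSubalgebra σ} {c : ℂ}
    (hf : ∀ᶠ t in 𝓝 s, (f : ℝ → ℂ) t = c) (x : X) :
    φ (Ψ f x) = c * φ x := by
  obtain ⟨h, hh, hfh⟩ := exists_sub_mul_eq_sub_of_eventuallyEq hι f.2 hf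
  have hf_eq : f = (⟨_, hι⟩ - algebraMap ℂ _ (s : ℂ)) * ⟨h, hh⟩ + algebraMap ℂ _ c := by
    ext t
    simpa using (sub_eq_iff_eq_add.mp (hfh t).symm)
  have hann (y : X) : φ (Ψ (⟨_, hι⟩ - algebraMap ℂ _ (s : ℂ)) y) = 0 := by
    rw [map_sub, AlgHom.commutes, Algebra.algebraMap_eq_smul_one]
    simp [hφ]
  rw [hf_eq, map_add, map_mul, AlgHom.commutes, add_apply, map_add, mul_apply_eq_comp,
    hann, zero_add]
  simp [Algebra.algebraMap_eq_smul_one]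

/-- `T` has continuous eigenfunctionals that converge pointwise to a nonzero functional, although
both positive and negative eigenvalues occur infinitely often among them. -/
def HasTwoSidedEigenfunctionals (T : X →L[ℂ] X) : Prop :=
  ∃ (s : ℕ → ℝ) (φ : ℕ → X →L[ℂ] ℂ) (φ₀ : X →L[ℂ] ℂ),
    (∃ᶠ k in atTop, 0 < s k) ∧ (∃ᶠ k in atTop, s k < 0) ∧
    (∀ k x, φ k (T x) = s k * φ k x) ∧ φ₀ ≠ 0 ∧ ∀ x, Tendsto (φ · x) atTop (𝓝 (φ₀ x))

theorem indicator_Ioi_mem_bvSubalgebra (σ : Set ℝ) (a : ℝ) :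
    (Set.Ioi a).indicator (1 : ℝ → ℂ) ∈ bvSubalgebra σ := by
  have hmono : Monotone ((Set.Ioi a).indicator (1 : ℝ → ℝ)) :=
    fun x y hxy => by
      simp only [Set.indicator_apply, Set.mem_Ioi, Pi.one_apply]
      split_ifs <;> linarith
  have hbv : BoundedVariationOn ((Set.Ioi a).indicator (1 : ℝ → ℝ)) σ :=
    (hmono.monotoneOn σ).boundedVariationOn (C := 1) fun t _ => by
      by_cases ht : t ∈ Set.Ioi a <;> simp [ht]
  convert ofReal_comp_mem_bvSubalgebra hbv with t
  by_cases ht : t ∈ Set.Ioi a <;> simp [ht]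

theorem HasTwoSidedEigenfunctionals.not_hasBVAlgHom {T : X →L[ℂ] X}
    (hT : HasTwoSidedEigenfunctionals T) (σ : Set ℝ) : ¬ HasBVAlgHom σ T := by
  rintro ⟨Ψ, hι, rfl⟩
  obtain ⟨s, φ, φ₀, hpos, hneg, heig, hφ₀, hlim⟩ := hT
  let χ : bvSubalgebra σ := ⟨_, indicator_Ioi_mem_bvSubalgebra σ 0⟩
  refine hφ₀ (ContinuousLinearMap.ext fun x => ?_)
  have hχ_pos : ∃ᶠ k in atTop, φ k (Ψ χ x) = φ k x := hpos.mono fun k hk => by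
    have hχ : ∀ᶠ t in 𝓝 (s k), (χ : ℝ → ℂ) t = 1 := by
      filter_upwards [Ioi_mem_nhds hk] with t ht using Set.indicator_of_mem ht _
    simpa using apply_algHom_apply_of_eventuallyEq (heig k) hχ x
  have hχ_neg : ∃ᶠ k in atTop, φ k (Ψ χ x) = 0 := hneg.mono fun k hk => by
    have hχ : ∀ᶠ t in 𝓝 (s k), (χ : ℝ → ℂ) t = 0 := by
      filter_upwards [Iio_mem_nhds hk] with t ht using Set.indicator_of_notMem ht.not_gt _
    simpa using apply_algHom_apply_of_eventuallyEq (heig k) hχ x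
  calc φ₀ x = φ₀ (Ψ χ x) :=
        (tendsto_nhds_unique_of_frequently_eq (hlim _) (hlim x) hχ_pos).symm
    _ = 0 := tendsto_nhds_unique_of_frequently_eq (hlim _) tendsto_const_nhds hχ_neg

theorem map_aeval_apply_of_semiconj {L : X →L[ℂ] Y} {T : X →L[ℂ] X} {S : Y →L[ℂ] Y}
    (h : ∀ x, L (T x) = S (L x)) (p : Polynomial ℂ) (x : X) :
    L (Polynomial.aeval T p x) = Polynomial.aeval S p (L x) := by
  have hpow (n : ℕ) (y : X) : L ((T ^ n) y) = (S ^ n) (L y) := by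
    induction n generalizing y with
    | zero => rfl
    | succ n ih => rw [pow_succ, pow_succ, mul_apply_eq_comp, ih, h, mul_apply_eq_comp]
  induction p using Polynomial.induction_on' with
  | add p q hp hq => simp only [map_add, add_apply, hp, hq]
  | monomial n a =>
    simp only [Polynomial.aeval_monomial, Algebra.algebraMap_eq_smul_one, smul_mul_assoc, one_mul,
      smul_apply, map_smul, hpow]

theorem aeval_algebraMap_apply_eq_eval_smul (c : ℂ) (p : Polynomial ℂ) (y : Y) :
    Polynomial.aeval (algebraMap ℂ (Y →L[ℂ] Y) c) p y = p.eval c • y := by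
  rw [Polynomial.aeval_algebraMap_apply, Polynomial.coe_aeval_eq_eval,
    Algebra.algebraMap_eq_smul_one, smul_apply, one_apply_eq_self]

theorem apply_aeval_eq_eval_mul {φ : X →L[ℂ] ℂ} {T : X →L[ℂ] X} {c : ℂ}
    (h : ∀ x, φ (T x) = c * φ x) (p : Polynomial ℂ) (x : X) :
    φ (Polynomial.aeval T p x) = p.eval c * φ x := by
  rw [map_aeval_apply_of_semiconj (S := algebraMap ℂ _ c)
    (fun x => by simp [h, Algebra.algebraMap_eq_smul_one]), aeval_algebraMap_apply_eq_eval_smul,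
    smul_eq_mul]

theorem aeval_apply_eq_eval_zero_smul {T : X →L[ℂ] X} {x : X} (h : T x = 0) (p : Polynomial ℂ) :
    Polynomial.aeval T p x = p.eval 0 • x := by
  have hL := map_aeval_apply_of_semiconj (L := ContinuousLinearMap.toSpanSingleton ℂ x) (T := 0)
    (S := T) (fun c => by simp [h]) p 1
  have := aeval_algebraMap_apply_eq_eval_smul (0 : ℂ) p (1 : ℂ)
  rw [map_zero] at this
  simpa [this] using hL.symm

/-- `T` is an `AC(σ)` operator: its polynomial calculus is bounded for the `BV(σ)` norm. -/
def IsACOperator (σ : Set ℝ) (T : X →L[ℂ] X) : Prop :=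
  ∃ C : ℝ, 0 < C ∧ ∀ p : Polynomial ℂ,
    ‖Polynomial.aeval T p‖ ≤ C * bvNorm σ (fun t : ℝ => p.eval (t : ℂ))

section Retract

variable {i : Y →L[ℂ] X} {P : X →L[ℂ] Y}

theorem aeval_comp_comp_of_leftInverse (hPi : Function.LeftInverse P i) (S : Y →L[ℂ] Y)
    (p : Polynomial ℂ) :
    Polynomial.aeval (i ∘L S ∘L P) p =
      i ∘L Polynomial.aeval S p ∘L P + p.eval 0 • (1 - i ∘L P) := by
  ext x
  have hrange : Polynomial.aeval (i ∘L S ∘L P) p (i (P x)) = i (Polynomial.aeval S p (P x)) :=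
    (map_aeval_apply_of_semiconj (fun y => by simp [hPi y]) p (P x)).symm
  have hker : Polynomial.aeval (i ∘L S ∘L P) p (x - i (P x)) = p.eval 0 • (x - i (P x)) :=
    aeval_apply_eq_eval_zero_smul (by simp [hPi (P x)]) p
  rw [← add_sub_cancel (i (P x)) x, map_add, hrange, hker]
  simp

theorem IsACOperator.comp_comp_of_leftInverse {σ : Set ℝ} {S : Y →L[ℂ] Y} (hS : IsACOperator σ S)
    (hσ : Bornology.IsBounded σ) (h0 : (0 : ℝ) ∈ σ) (hPi : Function.LeftInverse P i) :
    IsACOperator σ (i ∘L S ∘L P) := by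
  obtain ⟨C, hC, hp⟩ := hS
  refine ⟨‖i‖ * C * ‖P‖ + (1 + ‖i‖ * ‖P‖), by positivity, fun p => ?_⟩
  have hp0 : ‖p.eval 0‖ ≤ bvNorm σ fun t : ℝ => p.eval (t : ℂ) := by
    simpa using norm_le_bvNorm (eval_mem_bvSubalgebra hσ p) h0
  rw [aeval_comp_comp_of_leftInverse hPi]
  set N := bvNorm σ fun t : ℝ => p.eval (t : ℂ)
  have hN : 0 ≤ N := bvNorm_nonneg σ _
  calc ‖i ∘L Polynomial.aeval S p ∘L P + p.eval 0 • (1 - i ∘L P)‖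
      ≤ ‖i‖ * (‖Polynomial.aeval S p‖ * ‖P‖)
          + ‖p.eval 0‖ * (‖(1 : X →L[ℂ] X)‖ + ‖i‖ * ‖P‖) := by
        grw [norm_add_le, norm_smul, norm_sub_le, i.opNorm_comp_le, i.opNorm_comp_le,
          ContinuousLinearMap.opNorm_comp_le _ P]
    _ ≤ ‖i‖ * ((C * N) * ‖P‖) + N * (1 + ‖i‖ * ‖P‖) := by
        gcongr
        · exact hp p
        · exact ContinuousLinearMap.norm_id_le
    _ = (‖i‖ * C * ‖P‖ + (1 + ‖i‖ * ‖P‖)) * N := by ring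

theorem HasTwoSidedEigenfunctionals.comp_comp_of_leftInverse {S : Y →L[ℂ] Y}
    (hS : HasTwoSidedEigenfunctionals S) (hPi : Function.LeftInverse P i) :
    HasTwoSidedEigenfunctionals (i ∘L S ∘L P) := by
  obtain ⟨s, φ, φ₀, hpos, hneg, heig, hφ₀, hlim⟩ := hS
  refine ⟨s, fun k => φ k ∘L P, φ₀ ∘L P, hpos, hneg, fun k x => ?_, fun h => hφ₀ ?_,
    fun x => hlim (P x)⟩
  · simp [hPi (S (P x)), heig]
  · ext y
    simpa [hPi y] using DFunLike.congr_fun h (i y)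

end Retract

/-- The points `-1, 1/2, -1/3, …` of `ℝ`; the junk value `1 / 0 = 0` puts their limit at
index `0`. -/
noncomputable def alternatingPoint (k : ℕ) : ℝ := (-1) ^ k / k

theorem alternatingPoint_zero : alternatingPoint 0 = 0 := by simp [alternatingPoint]

theorem zero_mem_range_alternatingPoint : (0 : ℝ) ∈ Set.range alternatingPoint :=
  ⟨0, alternatingPoint_zero⟩

theorem abs_alternatingPoint (k : ℕ) : |alternatingPoint k| = 1 / k := by
  simp [alternatingPoint, abs_div]

theorem tendsto_alternatingPoint : Tendsto alternatingPoint atTop (𝓝 0) := by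
  rw [tendsto_zero_iff_abs_tendsto_zero]
  exact tendsto_one_div_atTop_nhds_zero_nat.congr fun k => (abs_alternatingPoint k).symm

theorem tendsto_ofReal_alternatingPoint :
    Tendsto (fun k => (alternatingPoint k : ℂ)) atTop (𝓝 0) := by
  simpa [Function.comp_def] using
    (Complex.continuous_ofReal.tendsto 0).comp tendsto_alternatingPoint

theorem alternatingPoint_of_even {k : ℕ} (hk : Even k) : alternatingPoint k = 1 / k := by
  rw [alternatingPoint, hk.neg_one_pow]

theorem alternatingPoint_of_odd {k : ℕ} (hk : Odd k) : alternatingPoint k = -(1 / k) := by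
  rw [alternatingPoint, hk.neg_one_pow, neg_div]

theorem frequently_alternatingPoint_succ_pos : ∃ᶠ k in atTop, 0 < alternatingPoint (k + 1) :=
  frequently_atTop.mpr fun n => ⟨2 * n + 1, by omega, by
    rw [alternatingPoint_of_even ⟨n + 1, by omega⟩]; positivity⟩

theorem frequently_alternatingPoint_succ_neg : ∃ᶠ k in atTop, alternatingPoint (k + 1) < 0 :=
  frequently_atTop.mpr fun n => ⟨2 * n, by omega, by
    rw [alternatingPoint_of_odd ⟨n, rfl⟩, neg_lt_zero]; positivity⟩

theorem isCompact_range_alternatingPoint : IsCompact (Set.range alternatingPoint) := by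
  rw [← Set.insert_eq_of_mem zero_mem_range_alternatingPoint]
  exact tendsto_alternatingPoint.isCompact_insert_range

theorem antitone_alternatingPoint_even : Antitone fun j : ℕ => alternatingPoint (2 * j + 1 + 1) :=
  fun i j hij => by
    simp only
    rw [alternatingPoint_of_even ⟨j + 1, by ring⟩, alternatingPoint_of_even ⟨i + 1, by ring⟩]
    gcongr

theorem monotone_alternatingPoint_odd : Monotone fun j : ℕ => alternatingPoint (2 * j + 1) :=
  fun i j hij => by
    simp only
    rw [alternatingPoint_of_odd ⟨i, rfl⟩, alternatingPoint_of_odd ⟨j, rfl⟩]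
    gcongr

theorem tsum_edist_le_eVariationOn {E : Type*} [PseudoEMetricSpace E] (u : ℕ → E) :
    ∑' n, edist (u n) (u (n + 1)) ≤ eVariationOn u Set.univ :=
  ENNReal.tsum_le_of_sum_range_le fun _ =>
    (Finset.sum_congr rfl fun _ _ => edist_comm _ _).trans_le
      (eVariationOn.sum_le monotone_id fun _ => Set.mem_univ _)

theorem tsum_edist_alternatingPoint_le {E : Type*} [PseudoEMetricSpace E] (f : ℝ → E) :
    ∑' k, edist (f (alternatingPoint (k + 1))) (f (alternatingPoint (k + 3))) ≤
      2 * eVariationOn f (Set.range alternatingPoint) := by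
  rw [← tsum_even_add_odd ENNReal.summable ENNReal.summable, two_mul]
  exact add_le_add
    ((tsum_edist_le_eVariationOn _).trans (eVariationOn.comp_le_of_monotoneOn f _
      (monotone_alternatingPoint_odd.monotoneOn _) fun _ _ => Set.mem_range_self _))
    ((tsum_edist_le_eVariationOn _).trans (eVariationOn.comp_le_of_antitoneOn f _
      (antitone_alternatingPoint_even.antitoneOn _) fun _ _ => Set.mem_range_self _))

theorem sum_norm_sub_alternatingPoint_le {f : ℝ → ℂ}
    (hf : BoundedVariationOn f (Set.range alternatingPoint)) (s : Finset ℕ) :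
    ∑ k ∈ s, ‖f (alternatingPoint (k + 1)) - f (alternatingPoint (k + 3))‖ ≤
      2 * bvNorm (Set.range alternatingPoint) f := by
  have h := (ENNReal.sum_le_tsum s).trans (tsum_edist_alternatingPoint_le f)
  have h' := ENNReal.toReal_mono (ENNReal.mul_ne_top ENNReal.ofNat_ne_top hf) h
  rw [ENNReal.toReal_sum fun _ _ => edist_ne_top _ _, ENNReal.toReal_mul] at h'
  simp only [← dist_edist, dist_eq_norm, ENNReal.toReal_ofNat] at h'
  exact h'.trans (by gcongr; exact toReal_eVariationOn_le_bvNorm _ f)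

theorem norm_eval_alternatingPoint_le_bvNorm (p : Polynomial ℂ) (k : ℕ) :
    ‖p.eval (alternatingPoint k : ℂ)‖ ≤
      bvNorm (Set.range alternatingPoint) fun t : ℝ => p.eval (t : ℂ) :=
  norm_le_bvNorm (eval_mem_bvSubalgebra isCompact_range_alternatingPoint.isBounded p)
    (Set.mem_range_self k)

section C0Model

/-- A sequence of limit `0`, viewed as an element of `c₀`. -/
def c0OfTendsto (u : ℕ → ℂ) (hu : Tendsto u atTop (𝓝 0)) : C₀(ℕ, ℂ) where
  toFun := u
  continuous_toFun := continuous_of_discreteTopology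
  zero_at_infty' := by rwa [cocompact_eq_cofinite, Nat.cofinite_eq_atTop]

theorem tendsto_c0_apply (x : C₀(ℕ, ℂ)) : Tendsto x atTop (𝓝 0) := by
  have hx := x.zero_at_infty'
  rwa [cocompact_eq_cofinite, Nat.cofinite_eq_atTop] at hx

theorem norm_c0_apply_le (x : C₀(ℕ, ℂ)) (n : ℕ) : ‖x n‖ ≤ ‖x‖ :=
  x.toBCF.norm_coe_le_norm n

theorem norm_c0_le {x : C₀(ℕ, ℂ)} {M : ℝ} (h : ∀ n, ‖x n‖ ≤ M) : ‖x‖ ≤ M :=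
  (BoundedContinuousFunction.norm_le_of_nonempty (f := x.toBCF)).mpr h

/-- The `n`-th coordinate functional on `c₀`. -/
noncomputable def c0Eval (n : ℕ) : C₀(ℕ, ℂ) →L[ℂ] ℂ :=
  LinearMap.mkContinuous
    { toFun x := x n
      map_add' _ _ := rfl
      map_smul' _ _ := rfl } 1 fun x => by simpa using norm_c0_apply_le x n

theorem c0Eval_apply (n : ℕ) (x : C₀(ℕ, ℂ)) : c0Eval n x = x n := rfl

/-- The operator on `c₀` that maps `x` to the sequence `t n * (x 0 + x n)`, where `t` is
`alternatingPoint`. -/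
noncomputable def c0Model : C₀(ℕ, ℂ) →L[ℂ] C₀(ℕ, ℂ) :=
  let τ := c0OfTendsto _ tendsto_ofReal_alternatingPoint
  (c0Eval 0).smulRight τ + ContinuousLinearMap.mul ℂ C₀(ℕ, ℂ) τ

theorem c0Model_apply (x : C₀(ℕ, ℂ)) (n : ℕ) :
    c0Model x n = alternatingPoint n * (x 0 + x n) := by
  change x 0 * (alternatingPoint n : ℂ) + alternatingPoint n * x n = _
  ring

/-- The eigenfunctional of `c0Model` with eigenvalue `alternatingPoint n`. -/
noncomputable def c0Eigenfunctional (n : ℕ) : C₀(ℕ, ℂ) →L[ℂ] ℂ := c0Eval 0 + c0Eval n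

theorem c0Eigenfunctional_apply (n : ℕ) (x : C₀(ℕ, ℂ)) : c0Eigenfunctional n x = x 0 + x n := rfl

theorem c0Eigenfunctional_c0Model (n : ℕ) (x : C₀(ℕ, ℂ)) :
    c0Eigenfunctional n (c0Model x) = alternatingPoint n * c0Eigenfunctional n x := by
  simp [c0Eigenfunctional_apply, c0Model_apply, alternatingPoint_zero]

theorem tendsto_c0Eigenfunctional (x : C₀(ℕ, ℂ)) :
    Tendsto (c0Eigenfunctional · x) atTop (𝓝 (c0Eval 0 x)) := by
  simpa [c0Eigenfunctional_apply, c0Eval_apply] using (tendsto_c0_apply x).const_add (x 0)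

theorem c0Eval_ne_zero (n : ℕ) : c0Eval n ≠ 0 := fun h => by
  have hu : Tendsto (Pi.single n (1 : ℂ) : ℕ → ℂ) atTop (𝓝 0) :=
    tendsto_const_nhds.congr' <| (eventually_gt_atTop n).mono fun k hk => by
      simp [hk.ne']
  have h1 : c0Eval n (c0OfTendsto _ hu) = 1 := Pi.single_eq_same (M := fun _ => ℂ) n 1
  simp [h] at h1

theorem hasTwoSidedEigenfunctionals_c0Model : HasTwoSidedEigenfunctionals c0Model :=
  ⟨fun k => alternatingPoint (k + 1), fun k => c0Eigenfunctional (k + 1), c0Eval 0,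
    frequently_alternatingPoint_succ_pos, frequently_alternatingPoint_succ_neg,
    fun _ => c0Eigenfunctional_c0Model _, c0Eval_ne_zero 0,
    fun x => (tendsto_c0Eigenfunctional x).comp (tendsto_add_atTop_nat 1)⟩

theorem isACOperator_c0Model : IsACOperator (Set.range alternatingPoint) c0Model := by
  refine ⟨3, by norm_num, fun p => ?_⟩
  set N := bvNorm (Set.range alternatingPoint) fun t : ℝ => p.eval (t : ℂ)
  have hN : 0 ≤ N := bvNorm_nonneg _ _
  have hp (k : ℕ) : ‖p.eval (alternatingPoint k : ℂ)‖ ≤ N :=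
    norm_eval_alternatingPoint_le_bvNorm p k
  refine ContinuousLinearMap.opNorm_le_bound _ (by positivity) fun x =>
    norm_c0_le fun n => ?_
  set y := Polynomial.aeval c0Model p x
  have hy_zero : y 0 = p.eval (alternatingPoint 0 : ℂ) * x 0 :=
    apply_aeval_eq_eval_mul (φ := c0Eval 0)
      (fun x => by simp [c0Eval_apply, c0Model_apply, alternatingPoint_zero]) p x
  have hy_add : y 0 + y n = p.eval (alternatingPoint n : ℂ) * (x 0 + x n) :=
    apply_aeval_eq_eval_mul (c0Eigenfunctional_c0Model n) p x
  calc ‖y n‖ = ‖(y 0 + y n) - y 0‖ := by rw [add_sub_cancel_left]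
    _ ≤ ‖p.eval (alternatingPoint n : ℂ)‖ * (‖x 0‖ + ‖x n‖)
          + ‖p.eval (alternatingPoint 0 : ℂ)‖ * ‖x 0‖ := by
        rw [hy_add, hy_zero]
        grw [norm_sub_le, norm_mul, norm_mul, norm_add_le]
    _ ≤ N * (‖x‖ + ‖x‖) + N * ‖x‖ := by
        gcongr <;> first | exact hp _ | exact norm_c0_apply_le x _
    _ = 3 * N * ‖x‖ := by ring

end C0Model

section L1Model

open scoped lp

section Coordinates

variable {α : Type*} {F : α → Type*} [∀ a, NormedAddCommGroup (F a)]
  {E : ℕ → Type*} [∀ n, NormedAddCommGroup (E n)]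

theorem summable_norm_l1_apply (x : lp F 1) : Summable fun a => ‖x a‖ := by
  simpa using (memℓp_gen_iff (p := 1) (by simp)).mp (lp.memℓp x)

theorem l1_norm_eq_tsum (x : lp F 1) : ‖x‖ = ∑' a, ‖x a‖ := by
  simpa using lp.norm_eq_tsum_rpow (p := 1) (by simp) x

theorem sum_norm_l1_comp_le {ι : Type*} (x : lp F 1) {g : ι → α} (hg : Function.Injective g)
    (s : Finset ι) : ∑ j ∈ s, ‖x (g j)‖ ≤ ‖x‖ := by
  rw [l1_norm_eq_tsum]
  have hx := summable_norm_l1_apply x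
  exact ((hx.comp_injective hg).sum_le_tsum s fun _ _ => norm_nonneg _).trans
    (tsum_comp_le_tsum_of_inj hx (fun _ => norm_nonneg _) hg)

theorem l1_norm_le_of_sum_range_le {x : lp E 1} {M : ℝ}
    (h : ∀ m, ∑ n ∈ Finset.range m, ‖x n‖ ≤ M) : ‖x‖ ≤ M :=
  (l1_norm_eq_tsum x).trans_le (Real.tsum_le_of_sum_range_le (fun _ => norm_nonneg _) h)

/-- The bounded operator into `ℓ¹` whose coordinates are the given operators. -/
noncomputable def l1OfCoords [∀ n, NormedSpace ℂ (E n)] (φ : ∀ n, X →L[ℂ] E n) (M : ℝ)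
    (h : ∀ x m, ∑ n ∈ Finset.range m, ‖φ n x‖ ≤ M * ‖x‖) : X →L[ℂ] lp E 1 :=
  LinearMap.mkContinuous
    { toFun x := ⟨fun n => φ n x, (memℓp_gen_iff (p := 1) (by simp)).mpr <| by
        simpa using summable_of_sum_range_le (fun _ => norm_nonneg _) (h x)⟩
      map_add' x y := by ext n; exact map_add (φ n) x y
      map_smul' c x := by ext n; exact map_smul (φ n) c x } M
    fun x => l1_norm_le_of_sum_range_le (h x)

end Coordinates

/-- The `n`-th coordinate functional on `ℓ¹`. -/
noncomputable def l1Eval (n : ℕ) : ℓ¹(ℕ, ℂ) →L[ℂ] ℂ := lp.evalCLM ℂ (fun _ : ℕ => ℂ) 1 n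

theorem l1Eval_apply (n : ℕ) (x : ℓ¹(ℕ, ℂ)) : l1Eval n x = x n := rfl

theorem injective_add_one_add_two_mul (k : ℕ) : Function.Injective fun j => k + 1 + 2 * j :=
  fun _ _ h => by simpa using h

/-- The `k`-th eigenfunctional of `l1Model`; its eigenvalue is `alternatingPoint (k + 1)`. -/
noncomputable def l1Eigenfunctional (k : ℕ) : ℓ¹(ℕ, ℂ) →L[ℂ] ℂ :=
  l1Eval 0 + lp.tsumCLM ℂ ℕ ℂ ∘L l1OfCoords (fun j => l1Eval (k + 1 + 2 * j)) 1
    fun x _ => (sum_norm_l1_comp_le x (injective_add_one_add_two_mul k) _).trans_eq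
      (one_mul _).symm

theorem l1Eigenfunctional_apply (k : ℕ) (x : ℓ¹(ℕ, ℂ)) :
    l1Eigenfunctional k x = x 0 + ∑' j, x (k + 1 + 2 * j) := rfl

theorem summable_l1_tail (k : ℕ) (x : ℓ¹(ℕ, ℂ)) : Summable fun j => ‖x (k + 1 + 2 * j)‖ :=
  (summable_norm_l1_apply x).comp_injective (injective_add_one_add_two_mul k)

theorem l1Eigenfunctional_sub (k : ℕ) (x : ℓ¹(ℕ, ℂ)) :
    l1Eigenfunctional k x - l1Eigenfunctional (k + 2) x = x (k + 1) := by
  have hshift (j : ℕ) : k + 1 + 2 * (j + 1) = k + 2 + 1 + 2 * j := by ring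
  rw [l1Eigenfunctional_apply, l1Eigenfunctional_apply,
    (summable_l1_tail k x).of_norm.tsum_eq_zero_add]
  simp only [hshift]
  simp

theorem norm_l1Eigenfunctional_sub_le (k : ℕ) (x : ℓ¹(ℕ, ℂ)) :
    ‖l1Eigenfunctional k x - x 0‖ ≤ ∑' j, ‖x (j + (k + 1))‖ := by
  have hx : Summable fun j => ‖x (j + (k + 1))‖ :=
    (summable_nat_add_iff (k + 1)).mpr (summable_norm_l1_apply x)
  rw [l1Eigenfunctional_apply, add_sub_cancel_left]
  calc ‖∑' j, x (k + 1 + 2 * j)‖ ≤ ∑' j, ‖x (2 * j + (k + 1))‖ := by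
        simpa only [add_comm] using norm_tsum_le_tsum_norm (summable_l1_tail k x)
    _ ≤ ∑' j, ‖x (j + (k + 1))‖ :=
        tsum_comp_le_tsum_of_inj hx (fun _ => norm_nonneg _) (i := (2 * ·))
          (mul_right_injective₀ two_ne_zero)

theorem tendsto_l1Eigenfunctional (x : ℓ¹(ℕ, ℂ)) :
    Tendsto (l1Eigenfunctional · x) atTop (𝓝 (l1Eval 0 x)) := by
  rw [tendsto_iff_norm_sub_tendsto_zero]
  exact squeeze_zero (fun _ => norm_nonneg _) (norm_l1Eigenfunctional_sub_le · x)
    ((tendsto_add_atTop_iff_nat 1).mpr (tendsto_sum_nat_add fun n => ‖x n‖))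

theorem norm_l1Eigenfunctional_le (k : ℕ) (x : ℓ¹(ℕ, ℂ)) : ‖l1Eigenfunctional k x‖ ≤ 2 * ‖x‖ := by
  have htail : ‖∑' j, x (k + 1 + 2 * j)‖ ≤ ‖x‖ :=
    (norm_tsum_le_tsum_norm (summable_l1_tail k x)).trans <|
      (summable_l1_tail k x).tsum_le_of_sum_le
        (sum_norm_l1_comp_le x (injective_add_one_add_two_mul k))
  rw [l1Eigenfunctional_apply, two_mul]
  exact norm_add_le_of_le (lp.norm_apply_le_norm one_ne_zero x 0) htail

theorem sum_norm_mul_l1Eigenfunctional_sub_le {f : ℝ → ℂ}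
    (hf : BoundedVariationOn f (Set.range alternatingPoint)) (x : ℓ¹(ℕ, ℂ)) (s : Finset ℕ) :
    ∑ k ∈ s, ‖f (alternatingPoint (k + 1)) * l1Eigenfunctional k x
        - f (alternatingPoint (k + 3)) * l1Eigenfunctional (k + 2) x‖ ≤
      5 * bvNorm (Set.range alternatingPoint) f * ‖x‖ := by
  set N := bvNorm (Set.range alternatingPoint) f
  let a (k : ℕ) : ℂ := f (alternatingPoint (k + 1))
  have hparts (k : ℕ) : a k * l1Eigenfunctional k x - a (k + 2) * l1Eigenfunctional (k + 2) x =
      a k * x (k + 1) + (a k - a (k + 2)) * l1Eigenfunctional (k + 2) x := by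
    rw [← l1Eigenfunctional_sub k x]
    ring
  have hN : 0 ≤ N := bvNorm_nonneg _ f
  calc ∑ k ∈ s, ‖a k * l1Eigenfunctional k x - a (k + 2) * l1Eigenfunctional (k + 2) x‖
      ≤ ∑ k ∈ s, (N * ‖x (k + 1)‖ + ‖a k - a (k + 2)‖ * (2 * ‖x‖)) := by
        refine Finset.sum_le_sum fun k _ => ?_
        rw [hparts]
        grw [norm_add_le, norm_mul, norm_mul, norm_l1Eigenfunctional_le,
          norm_le_bvNorm hf (Set.mem_range_self (k + 1))]
    _ = N * ∑ k ∈ s, ‖x (k + 1)‖ + (∑ k ∈ s, ‖a k - a (k + 2)‖) * (2 * ‖x‖) := by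
        rw [Finset.sum_add_distrib, Finset.mul_sum, Finset.sum_mul]
    _ ≤ N * ‖x‖ + 2 * N * (2 * ‖x‖) := by
        gcongr
        · exact sum_norm_l1_comp_le x (add_left_injective 1) s
        · exact sum_norm_sub_alternatingPoint_le hf s
    _ = 5 * N * ‖x‖ := by ring

/-- The coordinates of `l1Model`, chosen so that they telescope to the eigenvalue equation of
`l1Eigenfunctional`. -/
noncomputable def l1ModelCoord : ℕ → ℓ¹(ℕ, ℂ) →L[ℂ] ℂ
  | 0 => 0
  | k + 1 => (alternatingPoint (k + 1) : ℂ) • l1Eigenfunctional k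
      - (alternatingPoint (k + 3) : ℂ) • l1Eigenfunctional (k + 2)

/-- The operator on `ℓ¹` with coordinates `l1ModelCoord`. -/
noncomputable def l1Model : ℓ¹(ℕ, ℂ) →L[ℂ] ℓ¹(ℕ, ℂ) :=
  l1OfCoords l1ModelCoord
    (5 * bvNorm (Set.range alternatingPoint) fun t => (t : ℂ)) fun x m => by
      have hι := ofReal_mem_bvSubalgebra isCompact_range_alternatingPoint.isBounded
      have hι_nonneg := bvNorm_nonneg (Set.range alternatingPoint) fun t => (t : ℂ)
      cases m with
      | zero => simpa using by positivity
      | succ m =>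
        rw [Finset.sum_range_succ']
        simpa [l1ModelCoord] using sum_norm_mul_l1Eigenfunctional_sub_le hι x (Finset.range m)

theorem l1Model_apply_zero (x : ℓ¹(ℕ, ℂ)) : l1Model x 0 = 0 := rfl

theorem l1Model_apply_succ (x : ℓ¹(ℕ, ℂ)) (k : ℕ) :
    l1Model x (k + 1) = alternatingPoint (k + 1) * l1Eigenfunctional k x
      - alternatingPoint (k + 3) * l1Eigenfunctional (k + 2) x := rfl

theorem l1Eigenfunctional_l1Model (k : ℕ) (x : ℓ¹(ℕ, ℂ)) :
    l1Eigenfunctional k (l1Model x) = alternatingPoint (k + 1) * l1Eigenfunctional k x := by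
  let b (n : ℕ) : ℂ := alternatingPoint (k + 2 * n + 1) * l1Eigenfunctional (k + 2 * n) x
  have hb_apply (n : ℕ) : l1Model x (k + 1 + 2 * n) = b n - b (n + 1) := by
    rw [show k + 1 + 2 * n = k + 2 * n + 1 by ring, l1Model_apply_succ]
    rfl
  have hb_tendsto : Tendsto b atTop (𝓝 0) := by
    have h := (tendsto_ofReal_alternatingPoint.comp (tendsto_add_atTop_nat 1)).mul
      (tendsto_l1Eigenfunctional x)
    rw [zero_mul] at h
    exact h.comp (tendsto_atTop_mono (fun n => show n ≤ k + 2 * n by omega) tendsto_id)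
  have hb_sum : Tendsto (fun m => ∑ n ∈ Finset.range m, l1Model x (k + 1 + 2 * n)) atTop
      (𝓝 (b 0 - 0)) := by
    simpa only [hb_apply, Finset.sum_range_sub'] using hb_tendsto.const_sub (b 0)
  rw [sub_zero] at hb_sum
  rw [l1Eigenfunctional_apply, l1Model_apply_zero, zero_add]
  exact tendsto_nhds_unique (summable_l1_tail k (l1Model x)).of_norm.hasSum.tendsto_sum_nat hb_sum

theorem l1Eval_ne_zero (n : ℕ) : l1Eval n ≠ 0 := fun h => by
  have h1 : l1Eval n (lp.single 1 n 1) = 1 := by simp [l1Eval_apply]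
  simp [h] at h1

theorem hasTwoSidedEigenfunctionals_l1Model : HasTwoSidedEigenfunctionals l1Model :=
  ⟨fun k => alternatingPoint (k + 1), l1Eigenfunctional, l1Eval 0,
    frequently_alternatingPoint_succ_pos, frequently_alternatingPoint_succ_neg,
    l1Eigenfunctional_l1Model, l1Eval_ne_zero 0, tendsto_l1Eigenfunctional⟩

theorem isACOperator_l1Model : IsACOperator (Set.range alternatingPoint) l1Model := by
  refine ⟨6, by norm_num, fun p => ?_⟩
  have hp := eval_mem_bvSubalgebra isCompact_range_alternatingPoint.isBounded p
  set N := bvNorm (Set.range alternatingPoint) fun t : ℝ => p.eval (t : ℂ)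
  have hN : 0 ≤ N := bvNorm_nonneg _ _
  refine ContinuousLinearMap.opNorm_le_bound _ (by positivity) fun x =>
    l1_norm_le_of_sum_range_le fun m => ?_
  set y := Polynomial.aeval l1Model p x
  have hy_zero : ‖y 0‖ ≤ N * ‖x‖ := by
    have h : y 0 = p.eval (alternatingPoint 0 : ℂ) * x 0 :=
      apply_aeval_eq_eval_mul (φ := l1Eval 0)
        (fun x => by simp [l1Eval_apply, l1Model_apply_zero, alternatingPoint_zero]) p x
    grw [h, norm_mul, norm_eval_alternatingPoint_le_bvNorm p 0, lp.norm_apply_le_norm one_ne_zero x]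
  have hy_succ (k : ℕ) : y (k + 1) = p.eval (alternatingPoint (k + 1) : ℂ) * l1Eigenfunctional k x
      - p.eval (alternatingPoint (k + 3) : ℂ) * l1Eigenfunctional (k + 2) x := by
    rw [← l1Eigenfunctional_sub, apply_aeval_eq_eval_mul (l1Eigenfunctional_l1Model k),
      apply_aeval_eq_eval_mul (l1Eigenfunctional_l1Model (k + 2))]
  calc ∑ n ∈ Finset.range m, ‖y n‖ ≤ ∑ n ∈ Finset.range (m + 1), ‖y n‖ :=
        Finset.sum_le_sum_of_subset_of_nonneg (Finset.range_mono m.le_succ)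
          fun _ _ _ => norm_nonneg _
    _ = ∑ k ∈ Finset.range m, ‖y (k + 1)‖ + ‖y 0‖ := Finset.sum_range_succ' _ _
    _ ≤ 5 * N * ‖x‖ + N * ‖x‖ := by
        gcongr
        simp only [hy_succ]
        exact sum_norm_mul_l1Eigenfunctional_sub_le hp x _
    _ = 6 * N * ‖x‖ := by ring

end L1Model

theorem exists_isACOperator_not_hasBVAlgHom_of_closedComplemented {S : Y →L[ℂ] Y}
    (hS : IsACOperator (Set.range alternatingPoint) S) (hS_eig : HasTwoSidedEigenfunctionals S)
    {X₁ : Submodule ℂ X} (hX₁ : X₁.ClosedComplemented) (e : Y ≃L[ℂ] X₁) :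
    ∃ σ : Set ℝ, IsCompact σ ∧ ∃ T : X →L[ℂ] X, IsACOperator σ T ∧ ¬ HasBVAlgHom σ T := by
  obtain ⟨P, hP⟩ := hX₁
  have hPi : Function.LeftInverse (e.symm.toContinuousLinearMap ∘L P)
      (X₁.subtypeL ∘L e.toContinuousLinearMap) := fun y => by simp [hP]
  exact ⟨_, isCompact_range_alternatingPoint, _,
    hS.comp_comp_of_leftInverse isCompact_range_alternatingPoint.isBounded
      zero_mem_range_alternatingPoint hPi,
    (hS_eig.comp_comp_of_leftInverse hPi).not_hasBVAlgHom _⟩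

end Operators

theorem stmt7_general {X : Type*} [NormedAddCommGroup X] [NormedSpace ℂ X]
    (h : (∃ X₁ : Submodule ℂ X, X₁.ClosedComplemented ∧ Nonempty (C₀(ℕ, ℂ) ≃L[ℂ] X₁)) ∨
      ∃ X₁ : Submodule ℂ X, X₁.ClosedComplemented ∧
        Nonempty (lp (fun _ : ℕ => ℂ) 1 ≃L[ℂ] X₁)) :
    ∃ σ : Set ℝ, IsCompact σ ∧ ∃ T : X →L[ℂ] X, IsACOperator σ T ∧ ¬ HasBVAlgHom σ T := by
  rcases h with ⟨X₁, hX₁, ⟨e⟩⟩ | ⟨X₁, hX₁, ⟨e⟩⟩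
  · exact exists_isACOperator_not_hasBVAlgHom_of_closedComplemented isACOperator_c0Model
      hasTwoSidedEigenfunctionals_c0Model hX₁ e
  · exact exists_isACOperator_not_hasBVAlgHom_of_closedComplemented isACOperator_l1Model
      hasTwoSidedEigenfunctionals_l1Model hX₁ e

/-- If the complex Banach space `X` contains a complemented closed subspace
isomorphic to `c₀` (complex sequences converging to `0`, sup norm) or to `ℓ¹` (absolutely
summable complex sequences), then there are a compact set `σ ⊆ ℝ`, a bounded operator `T` on
`X` and a constant `C > 0` such that `‖p(T)‖ ≤ C·(sup_{t∈σ}|p(t)| + var_σ(p))` for every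
complex polynomial `p`, yet no `BV(σ)` extension of the polynomial calculus of `T` exists. -/
theorem stmt7 {X : Type*} [NormedAddCommGroup X] [NormedSpace ℂ X] [CompleteSpace X]
    (h : (∃ X₁ Z : Submodule ℂ X, IsClosed (X₁ : Set X) ∧ IsClosed (Z : Set X) ∧
            IsCompl X₁ Z ∧ Nonempty (C₀(ℕ, ℂ) ≃L[ℂ] ↥X₁)) ∨
         (∃ X₁ Z : Submodule ℂ X, IsClosed (X₁ : Set X) ∧ IsClosed (Z : Set X) ∧
            IsCompl X₁ Z ∧ Nonempty (lp (fun _ : ℕ => ℂ) 1 ≃L[ℂ] ↥X₁))) :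
    ∃ σ : Set ℝ, IsCompact σ ∧
      ∃ (T : X →L[ℂ] X) (C : ℝ), 0 < C ∧
        (∀ p : Polynomial ℂ,
          ‖(Polynomial.aeval T p : X →L[ℂ] X)‖ ≤
            C * bvNorm σ (fun t : ℝ => p.eval (t : ℂ))) ∧
        ¬ HasBVExtension σ T := by
  obtain ⟨σ, hσ, T, ⟨C, hC, hp⟩, hT⟩ := stmt7_general (X := X) <| h.imp
    (fun ⟨X₁, _, h₁, h₂, hc, he⟩ => ⟨X₁, .of_isCompl_isClosed hc h₁ h₂, he⟩)
    (fun ⟨X₁, _, h₁, h₂, hc, he⟩ => ⟨X₁, .of_isCompl_isClosed hc h₁ h₂, he⟩)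
  exact ⟨σ, hσ, T, C, hC, hp, fun hE => hT (hE.hasBVAlgHom hσ.isBounded)⟩
end

section
/- Let (Ω, Σ, μ) be a measure space, let 1 ≤ r < s ≤ ∞, and let K > 0. Suppose (T_p)_{p∈(r,s)} is a consistent family of bounded operators on the complex spaces L^p(μ) with ‖T_p‖ ≤ K for all p ∈ (r,s). Then there exists a unique bounded linear operator U on L^r(μ) such that U x = T_p x (μ-almost everywhere) for every p ∈ (r,s) and every x ∈ L^r(μ) ∩ L^p(μ); moreover ‖U‖ ≤ K. -/
open MeasureTheory Filter Topology ENNReal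

/-!
On `L^r ∩ L^p`, with `r < p < s`, consistency gives `‖T_p x‖_q = ‖T_q x‖_q ≤ K ‖x‖_q` for every
`q ∈ (r, p)`.  As `q` decreases to `r`, Fatou's lemma bounds the lower limit of the left side from
below by `‖T_p x‖_r`, and dominated convergence, with `|x|^r + |x|^p` as majorant, takes the right
side to `K ‖x‖_r`.  So `T_p` is bounded by `K` in the norm of `L^r` on `L^r ∩ L^p`, which contains
the simple functions of finite measure support and hence is dense in `L^r`.  The extensions to
`L^r` obtained for two exponents `q ≤ p` agree on `L^r ∩ L^p ⊆ L^r ∩ L^q`, so all of them are the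
same operator.
-/

section Exponent

variable {Ω ε : Type*} [MeasurableSpace Ω] {μ : Measure Ω} {p q r : ℝ≥0∞}

lemma ennreal_rpow_le_rpow_add_rpow (a : ℝ≥0∞) {x y z : ℝ} (hxy : x ≤ y) (hyz : y ≤ z) :
    a ^ y ≤ a ^ x + a ^ z := by
  rcases le_total a 1 with ha | ha
  · exact (ENNReal.rpow_le_rpow_of_exponent_ge ha hxy).trans le_self_add
  · exact (ENNReal.rpow_le_rpow_of_exponent_le ha hyz).trans le_add_self

lemma continuousAt_ennreal_const_rpow (a : ℝ≥0∞) {t : ℝ} (ht : 0 < t) :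
    ContinuousAt (fun u : ℝ ↦ a ^ u) t := by
  induction a with
  | top =>
    refine (continuousAt_const (y := (∞ : ℝ≥0∞))).congr ?_
    filter_upwards [lt_mem_nhds ht] with u hu using (ENNReal.top_rpow_of_pos hu).symm
  | coe a =>
    have hcont : ContinuousAt (fun u : ℝ ↦ ((a ^ u : NNReal) : ℝ≥0∞)) t :=
      ENNReal.continuous_coe.continuousAt.comp
        ((NNReal.continuousAt_rpow (.inr ht)).comp (continuousAt_const.prodMk continuousAt_id))
    refine hcont.congr ?_
    filter_upwards [lt_mem_nhds ht] with u hu using (ENNReal.coe_rpow_of_nonneg a hu.le)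

lemma lowerSemicontinuousAt_lintegral_rpow {f : Ω → ℝ≥0∞} (hf : AEMeasurable f μ) {t : ℝ}
    (ht : 0 < t) : LowerSemicontinuousAt (fun u : ℝ ↦ ∫⁻ ω, f ω ^ u ∂μ) t := by
  rw [lowerSemicontinuousAt_iff_le_liminf]
  calc ∫⁻ ω, f ω ^ t ∂μ
      = ∫⁻ ω, liminf (fun u : ℝ ↦ f ω ^ u) (𝓝 t) ∂μ :=
        lintegral_congr fun ω ↦ (continuousAt_ennreal_const_rpow (f ω) ht).tendsto.liminf_eq.symm
    _ ≤ liminf (fun u : ℝ ↦ ∫⁻ ω, f ω ^ u ∂μ) (𝓝 t) :=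
        lintegral_liminf_le' fun u ↦ hf.pow_const u

lemma continuousOn_lintegral_rpow {f : Ω → ℝ≥0∞} (hf : AEMeasurable f μ) {x y : ℝ} (hx : 0 < x)
    (hfx : ∫⁻ ω, f ω ^ x ∂μ ≠ ∞) (hfy : ∫⁻ ω, f ω ^ y ∂μ ≠ ∞) :
    ContinuousOn (fun t : ℝ ↦ ∫⁻ ω, f ω ^ t ∂μ) (Set.Icc x y) := by
  intro t ht
  refine tendsto_lintegral_filter_of_dominated_convergence' (fun ω ↦ f ω ^ x + f ω ^ y)
    (.of_forall fun u ↦ hf.pow_const u) ?_ ?_ (.of_forall fun ω ↦ ?_)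
  · filter_upwards [self_mem_nhdsWithin] with u hu
    exact .of_forall fun ω ↦ ennreal_rpow_le_rpow_add_rpow _ hu.1 hu.2
  · rw [lintegral_add_left' (hf.pow_const x)]
    exact ENNReal.add_ne_top.2 ⟨hfx, hfy⟩
  · exact (continuousAt_ennreal_const_rpow (f ω) (hx.trans_le ht.1)).continuousWithinAt

lemma eLpNorm_rpow_toReal [ENorm ε] {f : Ω → ε} (hp0 : p ≠ 0) (hp : p ≠ ∞) :
    eLpNorm f p μ ^ p.toReal = ∫⁻ ω, ‖f ω‖ₑ ^ p.toReal ∂μ := by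
  rw [eLpNorm_eq_lintegral_rpow_enorm_toReal hp0 hp, ← ENNReal.rpow_mul,
    one_div_mul_cancel (ENNReal.toReal_pos hp0 hp).ne', ENNReal.rpow_one]

lemma lt_eLpNorm_iff_rpow_lt_lintegral [ENorm ε] {f : Ω → ε} (hp0 : p ≠ 0) (hp : p ≠ ∞)
    {a : ℝ≥0∞} : a < eLpNorm f p μ ↔ a ^ p.toReal < ∫⁻ ω, ‖f ω‖ₑ ^ p.toReal ∂μ := by
  rw [← eLpNorm_rpow_toReal hp0 hp, ENNReal.rpow_lt_rpow_iff (ENNReal.toReal_pos hp0 hp)]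

lemma eLpNorm_lt_iff_lintegral_lt_rpow [ENorm ε] {f : Ω → ε} (hp0 : p ≠ 0) (hp : p ≠ ∞)
    {a : ℝ≥0∞} : eLpNorm f p μ < a ↔ ∫⁻ ω, ‖f ω‖ₑ ^ p.toReal ∂μ < a ^ p.toReal := by
  rw [← eLpNorm_rpow_toReal hp0 hp, ENNReal.rpow_lt_rpow_iff (ENNReal.toReal_pos hp0 hp)]

variable [TopologicalSpace ε] [ContinuousENorm ε] {f : Ω → ε}

lemma memLp_of_le_of_le (hr0 : r ≠ 0) (hp : p ≠ ∞) (hrq : r ≤ q) (hqp : q ≤ p)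
    (hfr : MemLp f r μ) (hfp : MemLp f p μ) : MemLp f q μ := by
  have hq : q ≠ ∞ := ne_top_of_le_ne_top hp hqp
  have hr : r ≠ ∞ := ne_top_of_le_ne_top hq hrq
  have hq0 : q ≠ 0 := (hr0.bot_lt.trans_le hrq).ne'
  have hp0 : p ≠ 0 := (hq0.bot_lt.trans_le hqp).ne'
  refine ⟨hfr.1, (eLpNorm_lt_top_iff_lintegral_rpow_enorm_lt_top hq0 hq).2 ?_⟩
  calc ∫⁻ ω, ‖f ω‖ₑ ^ q.toReal ∂μ
      ≤ ∫⁻ ω, (‖f ω‖ₑ ^ r.toReal + ‖f ω‖ₑ ^ p.toReal) ∂μ :=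
        lintegral_mono fun ω ↦ ennreal_rpow_le_rpow_add_rpow _
          (ENNReal.toReal_mono hq hrq) (ENNReal.toReal_mono hp hqp)
    _ = ∫⁻ ω, ‖f ω‖ₑ ^ r.toReal ∂μ + ∫⁻ ω, ‖f ω‖ₑ ^ p.toReal ∂μ :=
        lintegral_add_left' (hfr.1.enorm.pow_const _) _
    _ < ∞ := ENNReal.add_lt_top.2
        ⟨lintegral_rpow_enorm_lt_top_of_eLpNorm_lt_top hr0 hr hfr.2,
          lintegral_rpow_enorm_lt_top_of_eLpNorm_lt_top hp0 hp hfp.2⟩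

lemma lowerSemicontinuousAt_eLpNorm_exponent (hf : AEStronglyMeasurable f μ) (hr0 : r ≠ 0)
    (hr : r ≠ ∞) : LowerSemicontinuousAt (fun q ↦ eLpNorm f q μ) r := by
  intro a ha
  have hr_pos : 0 < r.toReal := ENNReal.toReal_pos hr0 hr
  have htoReal : Tendsto ENNReal.toReal (𝓝 r) (𝓝 r.toReal) := ENNReal.tendsto_toReal hr
  obtain ⟨c, hac, hc⟩ := exists_between ((lt_eLpNorm_iff_rpow_lt_lintegral hr0 hr).1 ha)
  filter_upwards [isOpen_ne.mem_nhds hr0, isOpen_ne.mem_nhds hr,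
    htoReal.eventually ((continuousAt_ennreal_const_rpow a hr_pos).eventually_lt_const hac),
    htoReal.eventually (lowerSemicontinuousAt_lintegral_rpow hf.enorm hr_pos c hc)]
    with q hq0 hq haq hcq
  exact (lt_eLpNorm_iff_rpow_lt_lintegral hq0 hq).2 (haq.trans hcq)

lemma continuousOn_eLpNorm_exponent (hr0 : r ≠ 0) (hp : p ≠ ∞) (hfr : MemLp f r μ)
    (hfp : MemLp f p μ) : ContinuousOn (fun q ↦ eLpNorm f q μ) (Set.Icc r p) := by
  intro q hq
  have ne_zero {u : ℝ≥0∞} (hu : u ∈ Set.Icc r p) : u ≠ 0 := (hr0.bot_lt.trans_le hu.1).ne'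
  have ne_top {u : ℝ≥0∞} (hu : u ∈ Set.Icc r p) : u ≠ ∞ := ne_top_of_le_ne_top hp hu.2
  have hrp : r ≤ p := hq.1.trans hq.2
  have hr : r ≠ ∞ := ne_top ⟨le_rfl, hrp⟩
  have hp0 : p ≠ 0 := ne_zero ⟨hrp, le_rfl⟩
  have htoReal : Tendsto ENNReal.toReal (𝓝[Set.Icc r p] q) (𝓝 q.toReal) :=
    (ENNReal.tendsto_toReal (ne_top hq)).mono_left nhdsWithin_le_nhds
  have maps : Set.MapsTo ENNReal.toReal (Set.Icc r p) (Set.Icc r.toReal p.toReal) :=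
    fun u hu ↦ ⟨ENNReal.toReal_mono (ne_top hu) hu.1, ENNReal.toReal_mono hp hu.2⟩
  have hint : ContinuousOn (fun t : ℝ ↦ ∫⁻ ω, ‖f ω‖ₑ ^ t ∂μ) (Set.Icc r.toReal p.toReal) :=
    continuousOn_lintegral_rpow hfr.1.enorm (ENNReal.toReal_pos hr0 hr)
      (lintegral_rpow_enorm_lt_top_of_eLpNorm_lt_top hr0 hr hfr.2).ne
      (lintegral_rpow_enorm_lt_top_of_eLpNorm_lt_top hp0 hp hfp.2).ne
  refine tendsto_order.2 ⟨fun a ha ↦ nhdsWithin_le_nhds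
    (lowerSemicontinuousAt_eLpNorm_exponent hfr.1 (ne_zero hq) (ne_top hq) a ha), fun a ha ↦ ?_⟩
  obtain ⟨c, hc, hca⟩ :=
    exists_between ((eLpNorm_lt_iff_lintegral_lt_rpow (ne_zero hq) (ne_top hq)).1 ha)
  have hq_pos : 0 < q.toReal := ENNReal.toReal_pos (ne_zero hq) (ne_top hq)
  filter_upwards [self_mem_nhdsWithin,
    (tendsto_nhdsWithin_iff.2 ⟨htoReal, eventually_mem_nhdsWithin.mono maps⟩).eventually
      ((hint _ (maps hq)).eventually_lt_const hc),
    htoReal.eventually ((continuousAt_ennreal_const_rpow a hq_pos).eventually_const_lt hca)]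
    with u hu hcu hau
  exact (eLpNorm_lt_iff_lintegral_lt_rpow (ne_zero hu) (ne_top hu)).2 (hcu.trans hau)

lemma eLpNorm_le_mul_of_forall_mem_Ioo {Ω' ε' : Type*} [MeasurableSpace Ω'] {ν : Measure Ω'}
    [TopologicalSpace ε'] [ContinuousENorm ε'] {g : Ω' → ε'} {C : ℝ≥0∞} (hC : C ≠ ∞)
    (hr0 : r ≠ 0) (hrp : r < p) (hp : p ≠ ∞) (hfr : MemLp f r μ) (hfp : MemLp f p μ)
    (hg : AEStronglyMeasurable g ν)
    (hgf : ∀ q ∈ Set.Ioo r p, eLpNorm g q ν ≤ C * eLpNorm f q μ) :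
    eLpNorm g r ν ≤ C * eLpNorm f r μ := by
  have hlim : Tendsto (fun q ↦ C * eLpNorm f q μ) (𝓝[Set.Ioo r p] r) (𝓝 (C * eLpNorm f r μ)) :=
    ENNReal.Tendsto.const_mul ((continuousOn_eLpNorm_exponent hr0 hp hfr hfp r
      ⟨le_rfl, hrp.le⟩).mono Set.Ioo_subset_Icc_self) (.inr hC)
  have : (𝓝[Set.Ioo r p] r).NeBot := left_nhdsWithin_Ioo_neBot hrp
  refine le_of_forall_lt_imp_le_of_dense fun a ha ↦ ge_of_tendsto hlim ?_
  have hag : ∀ᶠ q in 𝓝[Set.Ioo r p] r, a < eLpNorm g q ν :=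
    nhdsWithin_le_nhds (lowerSemicontinuousAt_eLpNorm_exponent hg hr0 hrp.ne_top a ha)
  filter_upwards [hag, self_mem_nhdsWithin] with q haq hq using haq.le.trans (hgf q hq)

end Exponent

section Consistent

variable {Ω Ω' 𝕜 E F : Type*} [MeasurableSpace Ω] [MeasurableSpace Ω'] [NormedAddCommGroup E]
  [NormedAddCommGroup F] {p q r s : ℝ≥0∞} {μ : Measure Ω} {ν : Measure Ω'}

/-- Consistency of a map on `L^p` with a map on `L^q`: they agree almost everywhere on
`L^p ∩ L^q`.  An element of the intersection is represented by a pair of almost everywhere equal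
elements of the two spaces. -/
def LpConsistent (S : Lp E p μ → Lp F p ν) (T : Lp E q μ → Lp F q ν) : Prop :=
  ∀ (x : Lp E p μ) (y : Lp E q μ), (x : Ω → E) =ᵐ[μ] (y : Ω → E) →
    (S x : Ω' → F) =ᵐ[ν] (T y : Ω' → F)

lemma LpConsistent.trans {R : Lp E r μ → Lp F r ν} {S : Lp E q μ → Lp F q ν}
    {T : Lp E p μ → Lp F p ν} (hRS : LpConsistent R S) (hST : LpConsistent S T) (hr0 : r ≠ 0)
    (hp : p ≠ ∞) (hrq : r ≤ q) (hqp : q ≤ p) : LpConsistent R T := by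
  intro x y hxy
  have hx : MemLp x q μ :=
    memLp_of_le_of_le hr0 hp hrq hqp (Lp.memLp x) ((Lp.memLp y).ae_eq hxy.symm)
  exact (hRS x (hx.toLp x) hx.coeFn_toLp.symm).trans (hST _ y (hx.coeFn_toLp.trans hxy))

variable [NontriviallyNormedField 𝕜] [NormedSpace 𝕜 E] [NormedSpace 𝕜 F]

variable (𝕜 E p q μ) in
/-- The intersection `L^p ∩ L^q` as a subspace of `L^p`, the domain on which a map of `L^q` acts
on elements of `L^p`. -/
def lpInter : Submodule 𝕜 (Lp E p μ) where
  carrier := {x | (x : Ω →ₘ[μ] E) ∈ Lp E q μ}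
  add_mem' hx hy := (Lp E q μ).add_mem hx hy
  zero_mem' := (Lp E q μ).zero_mem
  smul_mem' c _ hx := Lp.const_smul_mem_Lp c ⟨_, hx⟩

lemma mem_lpInter_iff_memLp {x : Lp E p μ} : x ∈ lpInter 𝕜 E p q μ ↔ MemLp x q μ :=
  Lp.mem_Lp_iff_memLp

/-- The inclusion of `L^p ∩ L^q`, seen as a subspace of `L^p`, into `L^q`; it keeps the underlying
almost everywhere class. -/
def lpInterToLp : lpInter 𝕜 E p q μ →ₗ[𝕜] Lp E q μ where
  toFun x := ⟨x.1, x.2⟩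
  map_add' _ _ := rfl
  map_smul' _ _ := rfl

lemma dense_lpInter [Fact (1 ≤ p)] (hp : p ≠ ∞) :
    Dense (lpInter 𝕜 E p q μ : Set (Lp E p μ)) := by
  refine (Lp.simpleFunc.dense (E := E) (μ := μ) hp).mono fun x hx ↦ ?_
  have hp0 : p ≠ 0 := (zero_lt_one.trans_le Fact.out).ne'
  let f : Lp.simpleFunc E p μ := ⟨x, hx⟩
  exact mem_lpInter_iff_memLp.2 <| MemLp.ae_eq (Lp.simpleFunc.toSimpleFunc_eq_toFun f) <|
    SimpleFunc.memLp_of_finite_measure_preimage q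
      ((SimpleFunc.memLp_iff hp0 hp).1 (Lp.simpleFunc.memLp f))

lemma LpConsistent.eq [Fact (1 ≤ r)] (hr : r ≠ ∞) {U V : Lp E r μ →L[𝕜] Lp F r ν}
    {S : Lp E p μ → Lp F p ν} (hU : LpConsistent U S) (hV : LpConsistent V S) : U = V := by
  refine ContinuousLinearMap.coeFn_injective <|
    Continuous.ext_on (dense_lpInter (𝕜 := 𝕜) (q := p) hr) U.continuous V.continuous fun x hx ↦ ?_
  exact Lp.ext ((hU x ⟨x, hx⟩ .rfl).trans (hV x ⟨x, hx⟩ .rfl).symm)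

lemma exists_lpConsistent_of_eLpNorm_le [CompleteSpace F] [Fact (1 ≤ r)] (hr : r ≠ ∞) {K : ℝ}
    (hK : 0 ≤ K) (S : Lp E p μ →ₗ[𝕜] Lp F p ν)
    (hS : ∀ x : Lp E p μ, MemLp x r μ → eLpNorm (S x) r ν ≤ ENNReal.ofReal K * eLpNorm x r μ) :
    ∃ U : Lp E r μ →L[𝕜] Lp F r ν, LpConsistent U S ∧ ‖U‖ ≤ K := by
  have hbound (x : lpInter 𝕜 E r p μ) :
      eLpNorm (S (lpInterToLp x)) r ν ≤ ENNReal.ofReal K * eLpNorm x.1 r μ :=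
    hS (lpInterToLp x) (Lp.memLp x.1)
  have hfinite (x : lpInter 𝕜 E r p μ) : ENNReal.ofReal K * eLpNorm x.1 r μ < ∞ :=
    ENNReal.mul_lt_top ENNReal.ofReal_lt_top (Lp.memLp x.1).2
  have hmem (x : lpInter 𝕜 E r p μ) : S (lpInterToLp x) ∈ lpInter 𝕜 F p r ν :=
    Lp.mem_Lp_iff_eLpNorm_lt_top.2 ((hbound x).trans_lt (hfinite x))
  let f : lpInter 𝕜 E r p μ →ₗ[𝕜] Lp F r ν :=
    lpInterToLp ∘ₗ (S ∘ₗ lpInterToLp).codRestrict _ hmem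
  have hf (x : lpInter 𝕜 E r p μ) : ‖f x‖ ≤ K * ‖(lpInter 𝕜 E r p μ).subtype x‖ := by
    calc ‖f x‖ ≤ (ENNReal.ofReal K * eLpNorm x.1 r μ).toReal :=
          ENNReal.toReal_mono (hfinite x).ne (hbound x)
      _ = K * ‖(lpInter 𝕜 E r p μ).subtype x‖ := by
          rw [ENNReal.toReal_mul, ENNReal.toReal_ofReal hK, Submodule.subtype_apply, Lp.norm_def]
  have hdense : DenseRange (lpInter 𝕜 E r p μ).subtype := (dense_lpInter hr).denseRange_val
  refine ⟨f.extendOfNorm (lpInter 𝕜 E r p μ).subtype, fun x y hxy ↦ ?_,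
    LinearMap.opNorm_extendOfNorm_le hdense hK hf⟩
  have hx : x ∈ lpInter 𝕜 E r p μ := mem_lpInter_iff_memLp.2 ((Lp.memLp y).ae_eq hxy.symm)
  have hxy' : lpInterToLp ⟨x, hx⟩ = y := Lp.ext hxy
  have hUx := LinearMap.extendOfNorm_eq hdense ⟨K, hf⟩ ⟨x, hx⟩
  rw [Submodule.subtype_apply] at hUx
  rw [hUx, ← hxy']
  rfl

lemma eLpNorm_apply_le_of_opNorm_le [Fact (1 ≤ p)] {S : Lp E p μ →L[𝕜] Lp F p ν} {K : ℝ}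
    (hS : ‖S‖ ≤ K) (x : Lp E p μ) :
    eLpNorm (S x) p ν ≤ ENNReal.ofReal K * eLpNorm x p μ := by
  rw [← Lp.enorm_def, ← Lp.enorm_def]
  calc ‖S x‖ₑ ≤ ‖S‖ₑ * ‖x‖ₑ := S.le_opENorm x
    _ ≤ ENNReal.ofReal K * ‖x‖ₑ := by
      rw [← ofReal_norm S]
      gcongr

section Family

variable [Fact (1 ≤ r)] {K : ℝ}
  {T : ∀ (p : ℝ≥0∞) [Fact (1 ≤ p)], r < p → p < s → Lp E p μ →L[𝕜] Lp F p ν}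

lemma eLpNorm_apply_le_of_consistent [Fact (1 ≤ p)]
    (hTK : ∀ (p : ℝ≥0∞) [Fact (1 ≤ p)] (hp : r < p) (hps : p < s), ‖T p hp hps‖ ≤ K)
    (hcons : ∀ (p q : ℝ≥0∞) [Fact (1 ≤ p)] [Fact (1 ≤ q)] (hp : r < p) (hps : p < s)
      (hq : r < q) (hqs : q < s), LpConsistent (T p hp hps) (T q hq hqs))
    (hp : r < p) (hps : p < s) (x : Lp E p μ) (hx : MemLp x r μ) :
    eLpNorm (T p hp hps x) r ν ≤ ENNReal.ofReal K * eLpNorm x r μ := by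
  have hr1 : 1 ≤ r := Fact.out
  have hr0 : r ≠ 0 := (zero_lt_one.trans_le hr1).ne'
  refine eLpNorm_le_mul_of_forall_mem_Ioo ENNReal.ofReal_ne_top hr0 hp hps.ne_top hx (Lp.memLp x)
    (Lp.aestronglyMeasurable _) fun q hq ↦ ?_
  have : Fact (1 ≤ q) := ⟨hr1.trans hq.1.le⟩
  have hxq : MemLp x q μ := memLp_of_le_of_le hr0 hps.ne_top hq.1.le hq.2.le hx (Lp.memLp x)
  have hqs : q < s := hq.2.trans hps
  calc eLpNorm (T p hp hps x) q ν
      = eLpNorm (T q hq.1 hqs (hxq.toLp x)) q ν :=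
        eLpNorm_congr_ae (hcons p q hp hps hq.1 hqs x _ hxq.coeFn_toLp.symm)
    _ ≤ ENNReal.ofReal K * eLpNorm (hxq.toLp x) q μ :=
        eLpNorm_apply_le_of_opNorm_le (hTK q hq.1 hqs) _
    _ = ENNReal.ofReal K * eLpNorm x q μ := by rw [eLpNorm_congr_ae hxq.coeFn_toLp]

theorem stmt8_general [CompleteSpace F] (hrs : r < s)
    (hTK : ∀ (p : ℝ≥0∞) [Fact (1 ≤ p)] (hp : r < p) (hps : p < s), ‖T p hp hps‖ ≤ K)
    (hcons : ∀ (p q : ℝ≥0∞) [Fact (1 ≤ p)] [Fact (1 ≤ q)] (hp : r < p) (hps : p < s)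
      (hq : r < q) (hqs : q < s), LpConsistent (T p hp hps) (T q hq hqs)) :
    ∃ U : Lp E r μ →L[𝕜] Lp F r ν,
      (∀ (p : ℝ≥0∞) [Fact (1 ≤ p)] (hp : r < p) (hps : p < s), LpConsistent U (T p hp hps)) ∧
      ‖U‖ ≤ K ∧
      ∀ U' : Lp E r μ →L[𝕜] Lp F r ν,
        (∀ (p : ℝ≥0∞) [Fact (1 ≤ p)] (hp : r < p) (hps : p < s),
          LpConsistent U' (T p hp hps)) → U' = U := by
  have hr1 : 1 ≤ r := Fact.out
  have hr0 : r ≠ 0 := (zero_lt_one.trans_le hr1).ne'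
  have extension (p : ℝ≥0∞) [Fact (1 ≤ p)] (hp : r < p) (hps : p < s) :
      ∃ U : Lp E r μ →L[𝕜] Lp F r ν, LpConsistent U (T p hp hps) ∧ ‖U‖ ≤ K :=
    exists_lpConsistent_of_eLpNorm_le hrs.ne_top ((norm_nonneg _).trans (hTK p hp hps))
      (T p hp hps).toLinearMap (eLpNorm_apply_le_of_consistent hTK hcons hp hps)
  obtain ⟨p, hp, hps⟩ := exists_between hrs
  have : Fact (1 ≤ p) := ⟨hr1.trans hp.le⟩
  obtain ⟨U, hU, hUK⟩ := extension p hp hps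
  refine ⟨U, fun q _ hq hqs ↦ ?_, hUK, fun U' hU' ↦ (hU' p hp hps).eq hrs.ne_top hU⟩
  obtain ⟨V, hV, -⟩ := extension q hq hqs
  have hUV : U = V := by
    rcases le_total p q with hpq | hqp
    · exact (hU.trans (hcons p q hp hps hq hqs) hr0 hqs.ne_top hp.le hpq).eq hrs.ne_top hV
    · exact hU.eq hrs.ne_top (hV.trans (hcons q p hq hqs hp hps) hr0 hps.ne_top hq.le hqp)
  exact hUV ▸ hV

end Family

end Consistent

/-- Let `(Ω, Σ, μ)` be a measure space, `1 ≤ r < s ≤ ∞` and `K > 0`.  If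
`(T_p)_{p ∈ (r,s)}` is a consistent family of bounded operators on the complex spaces
`L^p(μ)` with `‖T_p‖ ≤ K` for all `p ∈ (r,s)`, then there is a unique bounded operator `U` on
`L^r(μ)` such that `U x = T_p x` μ-a.e. for every `p ∈ (r,s)` and every
`x ∈ L^r(μ) ∩ L^p(μ)`; moreover `‖U‖ ≤ K`. -/
theorem stmt8 {Ω : Type*} [MeasurableSpace Ω] (μ : Measure Ω)
    (r s : ℝ≥0∞) (hr : 1 ≤ r) (hrs : r < s) (hs : s ≤ ∞) (K : ℝ) (hK : 0 < K)
    (T : ∀ (p : ℝ≥0∞) [Fact (1 ≤ p)], r < p → p < s → Lp ℂ p μ →L[ℂ] Lp ℂ p μ)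
    (hTK : ∀ (p : ℝ≥0∞) [Fact (1 ≤ p)] (hp : r < p) (hps : p < s), ‖T p hp hps‖ ≤ K)
    (hcons : ∀ (p q : ℝ≥0∞) [Fact (1 ≤ p)] [Fact (1 ≤ q)]
        (hp : r < p) (hps : p < s) (hq : r < q) (hqs : q < s)
        (x : Lp ℂ p μ) (y : Lp ℂ q μ), (x : Ω → ℂ) =ᵐ[μ] (y : Ω → ℂ) →
        (T p hp hps x : Ω → ℂ) =ᵐ[μ] (T q hq hqs y : Ω → ℂ)) :
    haveI : Fact (1 ≤ r) := ⟨hr⟩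
    ∃ U : Lp ℂ r μ →L[ℂ] Lp ℂ r μ,
      (∀ (p : ℝ≥0∞) [Fact (1 ≤ p)] (hp : r < p) (hps : p < s)
        (x : Lp ℂ r μ) (y : Lp ℂ p μ), (x : Ω → ℂ) =ᵐ[μ] (y : Ω → ℂ) →
          (U x : Ω → ℂ) =ᵐ[μ] (T p hp hps y : Ω → ℂ)) ∧
      ‖U‖ ≤ K ∧
      ∀ U' : Lp ℂ r μ →L[ℂ] Lp ℂ r μ,
        (∀ (p : ℝ≥0∞) [Fact (1 ≤ p)] (hp : r < p) (hps : p < s)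
          (x : Lp ℂ r μ) (y : Lp ℂ p μ), (x : Ω → ℂ) =ᵐ[μ] (y : Ω → ℂ) →
            (U' x : Ω → ℂ) =ᵐ[μ] (T p hp hps y : Ω → ℂ)) → U' = U := by
  have : Fact (1 ≤ r) := ⟨hr⟩
  exact stmt8_general hrs hTK hcons
end
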